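/- arXiv:2510.12034 — 6 statements merged into one kernel-verified Lean document; each statement's English description precedes it below -/
import Mathlib

section
/- Let N be an ℕ-valued random variable with E[N] = 1 and E[N²] < ∞, and let D ≥ 0 be a random variable, on a common probability space; set Φ_t(x) = E[e^{−tD} · x^N] for t ≥ 0 and x ∈ [0,1]. Then for every ε > 0 there exists δ > 0 such that for every t ≥ 0 and every x ∈ [1−δ, 1]: |Φ_t(x) − x − E[e^{−tD} − 1] − (x−1)·(E[N·e^{−tD}] − 1) − ((x−1)²/2)·E[(N² − N)·e^{−tD}]| ≤ ε·(x−1)². -/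
open MeasureTheory ProbabilityTheory Filter

lemma aux_bounds (s : ℝ) (h0 : 0 ≤ s) (h1 : s ≤ 1) (n : ℕ) :
    1 - n * s ≤ (1 - s) ^ n ∧
    (1 - s) ^ n ≤ 1 - n * s + ((n : ℝ) ^ 2 - n) / 2 * s ^ 2 ∧
    1 - n * s + ((n : ℝ) ^ 2 - n) / 2 * s ^ 2 - (n : ℝ) ^ 3 * s ^ 3 ≤ (1 - s) ^ n := by
  have hs : 0 ≤ 1 - s := by linarith
  induction n with
  | zero => simp
  | succ n ih =>
    obtain ⟨ha, hb, hc⟩ := ih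
    have hn : (0 : ℝ) ≤ n := Nat.cast_nonneg n
    have hn2 : (0 : ℝ) ≤ (n : ℝ) ^ 2 - n := by
      have : (n : ℝ) ≤ (n : ℝ) ^ 2 := by exact_mod_cast Nat.le_self_pow (by norm_num) n
      linarith
    have ha' := mul_le_mul_of_nonneg_right ha hs
    have hb' := mul_le_mul_of_nonneg_right hb hs
    have hc' := mul_le_mul_of_nonneg_right hc hs
    have e1 : 0 ≤ (n : ℝ) * s ^ 2 := by positivity
    have e2 : 0 ≤ ((n : ℝ) ^ 2 - n) * s ^ 3 := by positivity
    have e3 : 0 ≤ (n : ℝ) ^ 3 * s ^ 4 := by positivity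
    have e4 : 0 ≤ (n : ℝ) * s ^ 3 := by positivity
    have e5 : 0 ≤ (n : ℝ) ^ 2 * s ^ 3 := by positivity
    have e6 : 0 ≤ s ^ 3 := by positivity
    rw [pow_succ]
    push_cast
    refine ⟨?_, ?_, ?_⟩ <;> nlinarith

lemma aux_abs (s δ : ℝ) (h0 : 0 ≤ s) (h1 : s ≤ 1) (hδ : s ≤ δ) (n : ℕ) :
    |(1 - s) ^ n - 1 + n * s - ((n : ℝ) ^ 2 - n) / 2 * s ^ 2|
      ≤ s ^ 2 * min ((n : ℝ) ^ 2) (δ * (n : ℝ) ^ 3) := by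
  obtain ⟨ha, hb, hc⟩ := aux_bounds s h0 h1 n
  have hn : (0 : ℝ) ≤ n := Nat.cast_nonneg n
  have e1 : 0 ≤ (n : ℝ) * s ^ 2 := by positivity
  have e2 : 0 ≤ (n : ℝ) ^ 2 * s ^ 2 := by positivity
  have e3 : 0 ≤ (δ - s) * ((n : ℝ) ^ 3 * s ^ 2) := mul_nonneg (by linarith) (by positivity)
  rw [mul_min_of_nonneg _ _ (sq_nonneg s), abs_of_nonpos (by linarith)]
  refine le_min ?_ ?_ <;> nlinarith

/-- Taylor expansion of `Φ_t` near `x = 1`, uniform in `t ≥ 0`; part of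
Lemma 25 of the paper.  Let `N` be `ℕ`-valued with `E[N] = 1` and `E[N²] < ∞`, `D ≥ 0`, and
`Φ_t(x) = E[e^{−tD}·x^N]`.  For every `ε > 0` there is `δ > 0` such that for all `t ≥ 0` and
`x ∈ [1−δ,1]`:
`|Φ_t(x) − x − E[e^{−tD} − 1] − (x−1)·(E[N·e^{−tD}] − 1)
  − ((x−1)²/2)·E[(N² − N)·e^{−tD}]| ≤ ε·(x−1)²`. -/
theorem phi_t_taylor_expansion
    {Ω : Type*} [MeasurableSpace Ω] (P : Measure Ω) [IsProbabilityMeasure P]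
    (N : Ω → ℕ) (D : Ω → ℝ) (hNm : Measurable N) (hDm : Measurable D)
    (hN1 : ∫ ω, (N ω : ℝ) ∂P = 1)
    (hN2 : Integrable (fun ω => ((N ω : ℝ)) ^ 2) P)
    (hD0 : ∀ᵐ ω ∂P, 0 ≤ D ω) :
    ∀ ε : ℝ, 0 < ε → ∃ δ : ℝ, 0 < δ ∧ ∀ t : ℝ, 0 ≤ t → ∀ x ∈ Set.Icc (1 - δ) (1 : ℝ),
      |(∫ ω, Real.exp (-t * D ω) * x ^ (N ω) ∂P) - x
          - (∫ ω, (Real.exp (-t * D ω) - 1) ∂P)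
          - (x - 1) * ((∫ ω, (N ω : ℝ) * Real.exp (-t * D ω) ∂P) - 1)
          - (x - 1) ^ 2 / 2 *
              ∫ ω, ((N ω : ℝ) ^ 2 - (N ω : ℝ)) * Real.exp (-t * D ω) ∂P|
        ≤ ε * (x - 1) ^ 2 := by
  intro ε hε
  have hNr : Measurable (fun ω => (N ω : ℝ)) := measurable_from_top.comp hNm
  have hNi : Integrable (fun ω => (N ω : ℝ)) P := by
    refine hN2.mono' hNr.aestronglyMeasurable (ae_of_all _ fun ω => ?_)
    rw [Real.norm_of_nonneg (Nat.cast_nonneg _)]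
    exact_mod_cast Nat.le_self_pow (by norm_num) _
  have hmeas : ∀ d : ℝ, Measurable (fun ω => min ((N ω : ℝ) ^ 2) (d * (N ω : ℝ) ^ 3)) := fun d =>
    (hNr.pow_const 2).min ((hNr.pow_const 3).const_mul d)
  have hbd : ∀ d : ℝ, 0 ≤ d → ∀ ω,
      ‖min ((N ω : ℝ) ^ 2) (d * (N ω : ℝ) ^ 3)‖ ≤ (N ω : ℝ) ^ 2 := by
    intro d hd ω
    rw [Real.norm_of_nonneg (le_min (by positivity) (by positivity))]
    exact min_le_left _ _
  have hlim : Tendsto (fun k : ℕ => ∫ ω, min ((N ω : ℝ) ^ 2)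
      (1 / ((k : ℝ) + 1) * (N ω : ℝ) ^ 3) ∂P) atTop (nhds (∫ _, (0 : ℝ) ∂P)) := by
    refine tendsto_integral_of_dominated_convergence (fun ω => (N ω : ℝ) ^ 2)
      (fun k => (hmeas _).aestronglyMeasurable) hN2
      (fun k => ae_of_all _ (hbd _ (by positivity))) (ae_of_all _ fun ω => ?_)
    have h := (tendsto_one_div_add_atTop_nhds_zero_nat (𝕜 := ℝ)).mul_const ((N ω : ℝ) ^ 3)
    have h2 := (tendsto_const_nhds (x := (N ω : ℝ) ^ 2)).min h
    rwa [zero_mul, min_eq_right (by positivity)] at h2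
  rw [integral_zero] at hlim
  obtain ⟨k, hk⟩ := (hlim.eventually (gt_mem_nhds hε)).exists
  set δ : ℝ := 1 / ((k : ℝ) + 1) with hδ
  have hδ0 : 0 < δ := by positivity
  have hδ1 : δ ≤ 1 := by
    rw [hδ, div_le_one (by positivity)]
    linarith [(Nat.cast_nonneg k : (0 : ℝ) ≤ k)]
  refine ⟨δ, hδ0, fun t ht x hx => ?_⟩
  obtain ⟨hx1, hx2⟩ := hx
  have hem : Measurable (fun ω => Real.exp (-t * D ω)) := (hDm.const_mul _).exp
  have hele : ∀ᵐ ω ∂P, ‖Real.exp (-t * D ω)‖ ≤ 1 := by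
    filter_upwards [hD0] with ω hω
    rw [Real.norm_of_nonneg (Real.exp_pos _).le, Real.exp_le_one_iff]
    nlinarith
  have key : ∀ f : Ω → ℝ, Integrable f P → Integrable (fun ω => f ω * Real.exp (-t * D ω)) P :=
    fun f hf => hf.mul_bdd (c := 1) hem.aestronglyMeasurable hele
  have i0 : Integrable (fun ω => Real.exp (-t * D ω)) P := by
    simpa using key (fun _ => 1) (integrable_const _)
  have i1 := key _ hNi
  have i2 := key _ (hN2.sub hNi)
  simp only [Pi.sub_apply] at i2
  have ix : Integrable (fun ω => x ^ (N ω)) P := by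
    refine (integrable_const (1 : ℝ)).mono'
      ((measurable_from_top (f := fun n : ℕ => x ^ n)).comp hNm).aestronglyMeasurable
      (ae_of_all _ fun ω => ?_)
    have h0 : 0 ≤ x := by linarith
    rw [Real.norm_of_nonneg (by positivity)]
    exact pow_le_one₀ h0 hx2
  have i3 : Integrable (fun ω => Real.exp (-t * D ω) * x ^ (N ω)) P := by
    simpa only [mul_comm] using key _ ix
  have hm : Integrable (fun ω => min ((N ω : ℝ) ^ 2) (δ * (N ω : ℝ) ^ 3)) P :=
    hN2.mono' (hmeas δ).aestronglyMeasurable (ae_of_all _ (hbd δ hδ0.le))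
  have heq : (∫ ω, Real.exp (-t * D ω) * x ^ (N ω) ∂P) - x
          - (∫ ω, (Real.exp (-t * D ω) - 1) ∂P)
          - (x - 1) * ((∫ ω, (N ω : ℝ) * Real.exp (-t * D ω) ∂P) - 1)
          - (x - 1) ^ 2 / 2 *
              ∫ ω, ((N ω : ℝ) ^ 2 - (N ω : ℝ)) * Real.exp (-t * D ω) ∂P
      = ∫ ω, (Real.exp (-t * D ω) * x ^ (N ω) - Real.exp (-t * D ω)
          - (x - 1) * ((N ω : ℝ) * Real.exp (-t * D ω))
          - (x - 1) ^ 2 / 2 * (((N ω : ℝ) ^ 2 - (N ω : ℝ)) * Real.exp (-t * D ω))) ∂P := by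
    have j1 : Integrable (fun ω => Real.exp (-t * D ω) * x ^ (N ω) - Real.exp (-t * D ω)) P :=
      i3.sub i0
    have j2 : Integrable (fun ω => Real.exp (-t * D ω) * x ^ (N ω) - Real.exp (-t * D ω)
        - (x - 1) * ((N ω : ℝ) * Real.exp (-t * D ω))) P := j1.sub (i1.const_mul _)
    rw [integral_sub j2 (i2.const_mul _),
      integral_sub j1 (i1.const_mul _), integral_sub i3 i0,
      integral_sub i0 (integrable_const _), integral_const_mul, integral_const_mul]
    simp
    ring
  rw [heq, ← Real.norm_eq_abs]
  calc _ ≤ ∫ ω, (x - 1) ^ 2 * min ((N ω : ℝ) ^ 2) (δ * (N ω : ℝ) ^ 3) ∂P := by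
        refine norm_integral_le_of_norm_le (hm.const_mul _) ?_
        filter_upwards [hele] with ω hω
        have h := aux_abs (1 - x) δ (by linarith) (by linarith) (by linarith) (N ω)
        rw [sub_sub_cancel, ← Real.norm_eq_abs] at h
        have e : Real.exp (-t * D ω) * x ^ (N ω) - Real.exp (-t * D ω)
          - (x - 1) * ((N ω : ℝ) * Real.exp (-t * D ω))
          - (x - 1) ^ 2 / 2 * (((N ω : ℝ) ^ 2 - (N ω : ℝ)) * Real.exp (-t * D ω))
          = Real.exp (-t * D ω) * (x ^ N ω - 1 + N ω * (1 - x)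
            - ((N ω : ℝ) ^ 2 - N ω) / 2 * (1 - x) ^ 2) := by ring
        rw [e, norm_mul]
        refine (mul_le_of_le_one_left (norm_nonneg _) hω).trans (h.trans_eq ?_)
        ring
    _ = (x - 1) ^ 2 * ∫ ω, min ((N ω : ℝ) ^ 2) (δ * (N ω : ℝ) ^ 3) ∂P := integral_const_mul _ _
    _ ≤ ε * (x - 1) ^ 2 := by
        rw [mul_comm]
        exact mul_le_mul_of_nonneg_right hk.le (sq_nonneg _)
end

section
/- Let N be an ℕ-valued random variable with E[N] = 1 and E[N²] = 1 + σ² where σ² ∈ (0,∞), and let D ≥ 0 be a random variable with E[D] = 1, on a common probability space. Then for every t > 0 there is exactly one x_t ∈ [0,1] satisfying x_t = E[e^{−tD} · x_t^N]; it lies in (0,1); and (1 − x_t)·√(σ²/(2t)) → 1 as t → 0⁺. -/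
open MeasureTheory ProbabilityTheory Filter

/-- auxiliary polynomial -/
noncomputable def psiAux (n : ℕ) (x : ℝ) : ℝ :=
  ∑ j ∈ Finset.range n, ∑ i ∈ Finset.range j, x ^ i

lemma psiAux_eq (n : ℕ) (x : ℝ) : (1 - x) ^ 2 * psiAux n x = x ^ n - 1 + n * (1 - x) := by
  induction n with
  | zero => simp [psiAux]
  | succ k ih =>
    have h : psiAux (k + 1) x = psiAux k x + ∑ i ∈ Finset.range k, x ^ i := by
      simp [psiAux, Finset.sum_range_succ]
    have h2 := mul_neg_geom_sum x k
    rw [h, mul_add, ih, sq, mul_assoc, h2]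
    push_cast
    ring

lemma psiAux_nonneg (n : ℕ) {x : ℝ} (hx : 0 ≤ x) : 0 ≤ psiAux n x :=
  Finset.sum_nonneg fun _ _ => Finset.sum_nonneg fun _ _ => pow_nonneg hx _

lemma psiAux_one (n : ℕ) : psiAux n 1 = ((n : ℝ) ^ 2 - n) / 2 := by
  induction n with
  | zero => simp [psiAux]
  | succ k ih =>
    have h : psiAux (k + 1) 1 = psiAux k 1 + k := by
      simp [psiAux, Finset.sum_range_succ]
    rw [h, ih]; push_cast; ring

lemma psiAux_le (n : ℕ) {x : ℝ} (hx : 0 ≤ x) (hx1 : x ≤ 1) : psiAux n x ≤ (n : ℝ) ^ 2 := by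
  have h : psiAux n x ≤ psiAux n 1 := by
    unfold psiAux
    gcongr
  rw [psiAux_one] at h
  have : (0 : ℝ) ≤ n := Nat.cast_nonneg n
  nlinarith [sq_nonneg (n : ℝ)]

lemma psiAux_ge (n : ℕ) {x : ℝ} (hx : 0 ≤ x) : (if 2 ≤ n then (1 : ℝ) else 0) ≤ psiAux n x := by
  split_ifs with h
  · have h1 : (∑ i ∈ Finset.range 1, x ^ i) ≤ psiAux n x :=
      Finset.single_le_sum (f := fun j => ∑ i ∈ Finset.range j, x ^ i)
        (fun _ _ => Finset.sum_nonneg fun _ _ => pow_nonneg hx _) (Finset.mem_range.2 (by omega))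
    simpa using h1
  · exact psiAux_nonneg n hx

lemma psiAux_cont (n : ℕ) : Continuous (psiAux n) := by
  unfold psiAux; fun_prop

/-- fixed point `h_t(∞)` and its asymptotics; part of Lemma 25 of the
paper.  Let `N` be `ℕ`-valued with `E[N] = 1`, `E[N²] = 1 + σ²`, `σ² ∈ (0,∞)`, and `D ≥ 0`
with `E[D] = 1`.  For every `t > 0` there is exactly one `x_t ∈ [0,1]` with
`x_t = E[e^{−tD}·x_t^N]`; it lies in `(0,1)`, and `(1 − x_t)·√(σ²/(2t)) → 1` as `t → 0⁺`. -/
theorem fixed_point_asymptotics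
    {Ω : Type*} [MeasurableSpace Ω] (P : Measure Ω) [IsProbabilityMeasure P]
    (N : Ω → ℕ) (D : Ω → ℝ) (hNm : Measurable N) (hDm : Measurable D)
    (σ2 : ℝ) (hσ : 0 < σ2)
    (hN1 : ∫ ω, (N ω : ℝ) ∂P = 1)
    (hN2 : ∫ ω, ((N ω : ℝ)) ^ 2 ∂P = 1 + σ2)
    (hD0 : ∀ᵐ ω ∂P, 0 ≤ D ω) (hD1 : ∫ ω, D ω ∂P = 1) :
    (∀ t : ℝ, 0 < t →
      ∃! x : ℝ, x ∈ Set.Icc (0 : ℝ) 1 ∧ x = ∫ ω, Real.exp (-t * D ω) * x ^ (N ω) ∂P)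
    ∧
    ∀ xf : ℝ → ℝ,
      (∀ t : ℝ, 0 < t → xf t ∈ Set.Icc (0 : ℝ) 1 ∧
          xf t = ∫ ω, Real.exp (-t * D ω) * (xf t) ^ (N ω) ∂P) →
      (∀ t : ℝ, 0 < t → xf t ∈ Set.Ioo (0 : ℝ) 1) ∧
      Tendsto (fun t : ℝ => (1 - xf t) * Real.sqrt (σ2 / (2 * t)))
        (nhdsWithin 0 (Set.Ioi 0)) (nhds 1) := by
  classical
  have iN : Integrable (fun ω => (N ω : ℝ)) P := by
    by_contra h; rw [integral_undef h] at hN1; norm_num at hN1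
  have iN2 : Integrable (fun ω => (N ω : ℝ) ^ 2) P := by
    by_contra h; rw [integral_undef h] at hN2; linarith
  have iD : Integrable D P := by
    by_contra h; rw [integral_undef h] at hD1; norm_num at hD1
  have mF : ∀ F : ℕ → ℝ, Measurable (fun ω => F (N ω)) := fun F =>
    (measurable_of_countable F).comp hNm
  have mE : ∀ t : ℝ, Measurable (fun ω => Real.exp (-t * D ω)) := fun t => by fun_prop
  have mI : ∀ t x : ℝ, Measurable (fun ω => Real.exp (-t * D ω) * x ^ (N ω)) := fun t x =>
    (mE t).mul (mF fun n => x ^ n)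
  have hbd : ∀ t : ℝ, 0 < t → ∀ x : ℝ, x ∈ Set.Icc (0:ℝ) 1 → ∀ᵐ ω ∂P,
      ‖Real.exp (-t * D ω) * x ^ (N ω)‖ ≤ 1 := by
    intro t ht x hx
    filter_upwards [hD0] with ω hω
    have h1 : Real.exp (-t * D ω) ≤ 1 := Real.exp_le_one_iff.2 (by nlinarith)
    have h2 : x ^ (N ω) ≤ 1 := pow_le_one₀ hx.1 hx.2
    have h3 : 0 ≤ x ^ (N ω) := pow_nonneg hx.1 _
    have h4 := Real.exp_nonneg (-t * D ω)
    rw [Real.norm_eq_abs, abs_of_nonneg (mul_nonneg h4 h3)]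
    exact mul_le_one₀ h1 h3 h2
  have iI : ∀ t : ℝ, 0 < t → ∀ x : ℝ, x ∈ Set.Icc (0:ℝ) 1 →
      Integrable (fun ω => Real.exp (-t * D ω) * x ^ (N ω)) P := fun t ht x hx =>
    Integrable.of_bound (mI t x).aestronglyMeasurable 1 (hbd t ht x hx)
  have iX : ∀ x : ℝ, x ∈ Set.Icc (0:ℝ) 1 → Integrable (fun ω => x ^ (N ω)) P := by
    intro x hx
    refine Integrable.of_bound (mF fun n => x ^ n).aestronglyMeasurable 1 (ae_of_all _ fun ω => ?_)
    rw [Real.norm_eq_abs, abs_of_nonneg (pow_nonneg hx.1 _)]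
    exact pow_le_one₀ hx.1 hx.2
  -- endpoint values
  have f1 : ∀ t : ℝ, 0 < t → ∫ ω, Real.exp (-t * D ω) * (1:ℝ) ^ (N ω) ∂P < 1 := by
    intro t ht
    by_contra hcon
    push Not at hcon
    have i1 := iI t ht 1 (by simp)
    have hnn : 0 ≤ᵐ[P] fun ω => 1 - Real.exp (-t * D ω) * (1:ℝ) ^ (N ω) := by
      filter_upwards [hbd t ht 1 (by simp)] with ω hω
      have := (le_abs_self _).trans hω
      simp only [Pi.zero_apply]; linarith
    have hint : ∫ ω, (1 - Real.exp (-t * D ω) * (1:ℝ) ^ (N ω)) ∂P = 0 := by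
      refine le_antisymm ?_ (integral_nonneg_of_ae hnn)
      rw [integral_sub (integrable_const _) i1]
      simp only [integral_const, probReal_univ, smul_eq_mul]
      linarith
    rw [integral_eq_zero_iff_of_nonneg_ae hnn ((integrable_const _).sub i1)] at hint
    have : D =ᵐ[P] 0 := by
      filter_upwards [hint] with ω hω
      simp only [one_pow, mul_one, Pi.zero_apply] at hω ⊢
      have h : Real.exp (-t * D ω) = 1 := by linarith
      rw [Real.exp_eq_one_iff] at h
      rcases mul_eq_zero.1 h with h | h
      · linarith
      · exact h
    rw [integral_congr_ae this] at hD1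
    simp at hD1
  have f0 : ∀ t : ℝ, 0 < t → 0 < ∫ ω, Real.exp (-t * D ω) * (0:ℝ) ^ (N ω) ∂P := by
    intro t ht
    have hnn : 0 ≤ᵐ[P] fun ω => Real.exp (-t * D ω) * (0:ℝ) ^ (N ω) :=
      ae_of_all _ fun ω => by simp only [Pi.zero_apply]; positivity
    refine lt_of_le_of_ne (integral_nonneg_of_ae hnn) fun h => ?_
    have h := h.symm
    rw [integral_eq_zero_iff_of_nonneg_ae hnn (iI t ht 0 (by simp))] at h
    have hge : ∀ᵐ ω ∂P, (1:ℝ) ≤ N ω := by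
      filter_upwards [h] with ω hω
      have : N ω ≠ 0 := by
        intro h0
        simp [h0] at hω
      exact_mod_cast Nat.one_le_iff_ne_zero.2 this
    have hnn2 : 0 ≤ᵐ[P] fun ω => (N ω : ℝ) - 1 := by
      filter_upwards [hge] with ω hω
      simp only [Pi.zero_apply]; linarith
    have hint : ∫ ω, ((N ω : ℝ) - 1) ∂P = 0 := by
      rw [integral_sub iN (integrable_const _), hN1]; simp
    rw [integral_eq_zero_iff_of_nonneg_ae hnn2 (iN.sub (integrable_const _))] at hint
    have h1 : (fun ω => (N ω : ℝ) ^ 2) =ᵐ[P] fun _ => 1 := by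
      filter_upwards [hint] with ω hω
      simp only [Pi.zero_apply] at hω
      have : (N ω : ℝ) = 1 := by linarith
      rw [this]; norm_num
    rw [integral_congr_ae h1] at hN2
    simp at hN2
    linarith
  have hIoo : ∀ t : ℝ, 0 < t → ∀ x : ℝ, x ∈ Set.Icc (0:ℝ) 1 →
      x = ∫ ω, Real.exp (-t * D ω) * x ^ (N ω) ∂P → x ∈ Set.Ioo (0:ℝ) 1 := by
    intro t ht x hx hfx
    refine ⟨lt_of_le_of_ne hx.1 ?_, lt_of_le_of_ne hx.2 ?_⟩
    · rintro rfl
      exact absurd hfx (f0 t ht).ne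
    · rintro rfl
      exact absurd hfx (f1 t ht).ne'
  have huniq : ∀ t : ℝ, 0 < t → ∀ x y : ℝ, x ∈ Set.Icc (0:ℝ) 1 → y ∈ Set.Icc (0:ℝ) 1 →
      x = ∫ ω, Real.exp (-t * D ω) * x ^ (N ω) ∂P →
      y = ∫ ω, Real.exp (-t * D ω) * y ^ (N ω) ∂P → ¬ x < y := by
    intro t ht x y hx hy hfx hfy hxy
    have hy' := hIoo t ht y hy hfy
    set a := (1 - y) / (1 - x) with ha
    set b := (y - x) / (1 - x) with hb
    have hx1 : 0 < 1 - x := by linarith [hy'.2]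
    have ha0 : 0 ≤ a := div_nonneg (by linarith [hy.2]) hx1.le
    have hb0 : 0 < b := div_pos (by linarith) hx1
    have hab : a + b = 1 := by rw [ha, hb]; field_simp; ring
    have hyab : a * x + b * 1 = y := by rw [ha, hb]; field_simp; ring
    have hle : ∫ ω, Real.exp (-t * D ω) * y ^ (N ω) ∂P ≤
        ∫ ω, (a * (Real.exp (-t * D ω) * x ^ (N ω)) +
          b * (Real.exp (-t * D ω) * (1:ℝ) ^ (N ω))) ∂P := by
      refine integral_mono (iI t ht y hy)
        (((iI t ht x hx).const_mul a).add ((iI t ht 1 (by simp)).const_mul b)) fun ω => ?_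
      have hc := (convexOn_pow (𝕜 := ℝ) (N ω)).2 (x := x) (y := 1) hx.1 (by simp) ha0 hb0.le hab
      simp only [smul_eq_mul] at hc
      rw [hyab] at hc
      have := mul_le_mul_of_nonneg_left hc (Real.exp_nonneg (-t * D ω))
      simp only
      linarith
    rw [integral_add ((iI t ht x hx).const_mul a) ((iI t ht 1 (by simp)).const_mul b),
      integral_const_mul, integral_const_mul, ← hfy, ← hfx] at hle
    have := mul_lt_mul_of_pos_left (f1 t ht) hb0
    linarith
  refine ⟨?_, ?_⟩
  · intro t ht
    have hcont : ContinuousOn (fun x : ℝ => ∫ ω, Real.exp (-t * D ω) * x ^ (N ω) ∂P)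
        (Set.Icc 0 1) := by
      refine continuousOn_of_dominated (bound := fun _ => 1)
        (fun x _ => (mI t x).aestronglyMeasurable) (fun x hx => hbd t ht x hx)
        (integrable_const _) (ae_of_all _ fun ω => ?_)
      fun_prop
    have hc2 : ContinuousOn (fun x : ℝ => x - ∫ ω, Real.exp (-t * D ω) * x ^ (N ω) ∂P)
        (Set.Icc 0 1) := continuousOn_id.sub hcont
    have hivt := intermediate_value_Icc (zero_le_one' ℝ) hc2
    obtain ⟨x, hx, hx0⟩ := hivt (show (0:ℝ) ∈ Set.Icc _ _ from
      ⟨by simpa using (f0 t ht).le, by simpa using (f1 t ht).le⟩)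
    have hfx := sub_eq_zero.1 hx0
    refine ⟨x, ⟨hx, hfx⟩, ?_⟩
    rintro y ⟨hy, hfy⟩
    exact le_antisymm (not_lt.1 (huniq t ht x y hx hy hfx hfy))
      (not_lt.1 (huniq t ht y x hy hx hfy hfx))
  · intro xf hxf
    refine ⟨fun t ht => hIoo t ht _ (hxf t ht).1 (hxf t ht).2, ?_⟩
    have iPsi : ∀ x : ℝ, x ∈ Set.Icc (0:ℝ) 1 → Integrable (fun ω => psiAux (N ω) x) P := by
      intro x hx
      refine iN2.mono' (mF fun n => psiAux n x).aestronglyMeasurable (ae_of_all _ fun ω => ?_)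
      rw [Real.norm_eq_abs, abs_of_nonneg (psiAux_nonneg _ hx.1)]
      exact psiAux_le _ hx.1 hx.2
    set A : ℝ → ℝ := fun t => ∫ ω, psiAux (N ω) (xf t) ∂P with hA
    set B : ℝ → ℝ := fun t => ∫ ω, (1 - Real.exp (-t * D ω)) / t * xf t ^ (N ω) ∂P with hB
    have hBD : ∀ t : ℝ, 0 < t → ∀ᵐ ω ∂P,
        ‖(1 - Real.exp (-t * D ω)) / t * xf t ^ (N ω)‖ ≤ D ω := by
      intro t ht
      have hx := (hxf t ht).1
      filter_upwards [hD0] with ω hω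
      have h1 : Real.exp (-t * D ω) ≤ 1 := Real.exp_le_one_iff.2 (by nlinarith)
      have h2 : (1 - Real.exp (-t * D ω)) / t ≤ D ω := by
        rw [div_le_iff₀ ht]
        linarith [Real.add_one_le_exp (-t * D ω)]
      have h3 : 0 ≤ (1 - Real.exp (-t * D ω)) / t := div_nonneg (by linarith) ht.le
      have h4 : xf t ^ (N ω) ≤ 1 := pow_le_one₀ hx.1 hx.2
      have h5 : 0 ≤ xf t ^ (N ω) := pow_nonneg hx.1 _
      rw [Real.norm_eq_abs, abs_of_nonneg (mul_nonneg h3 h5)]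
      nlinarith
    have mB : ∀ t : ℝ, Measurable (fun ω => (1 - Real.exp (-t * D ω)) / t * xf t ^ (N ω)) :=
      fun t => ((measurable_const.sub (mE t)).div_const t).mul (mF fun n => xf t ^ n)
    have hkey : ∀ t : ℝ, 0 < t → (1 - xf t) ^ 2 * A t = t * B t := by
      intro t ht
      obtain ⟨hx, hfx⟩ := hxf t ht
      have hl : (1 - xf t) ^ 2 * A t = (∫ ω, xf t ^ (N ω) ∂P) - xf t := by
        rw [hA]
        simp only
        rw [← integral_const_mul]
        simp_rw [psiAux_eq]
        have i3 : Integrable (fun ω => xf t ^ (N ω) - 1) P := (iX _ hx).sub (integrable_const _)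
        rw [integral_add i3 (iN.mul_const _),
          integral_sub (iX _ hx) (integrable_const _), integral_mul_const, hN1]
        simp
      have hr : t * B t = (∫ ω, xf t ^ (N ω) ∂P) - xf t := by
        rw [hB]
        simp only
        rw [← integral_const_mul]
        conv_rhs => rw [hfx]
        have e1 : ∀ ω, t * ((1 - Real.exp (-t * D ω)) / t * xf t ^ (N ω)) =
            xf t ^ (N ω) - Real.exp (-t * D ω) * xf t ^ (N ω) := by
          intro ω; field_simp
        simp_rw [e1]
        rw [integral_sub (iX _ hx) (iI t ht _ hx), ← hfx]
      rw [hl, hr]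
    have hBle : ∀ t : ℝ, 0 < t → B t ≤ 1 := by
      intro t ht
      rw [← hD1]
      refine integral_mono_ae (iD.mono' (mB t).aestronglyMeasurable (hBD t ht)) iD ?_
      filter_upwards [hBD t ht] with ω hω
      exact (le_abs_self _).trans hω
    set q : Ω → ℝ := fun ω => if 2 ≤ N ω then (1:ℝ) else 0 with hq
    have hq0 : ∀ ω, 0 ≤ q ω := fun ω => by simp only [hq]; split_ifs <;> norm_num
    have iq : Integrable q P := by
      refine Integrable.of_bound
        (mF fun n => if 2 ≤ n then (1:ℝ) else 0).aestronglyMeasurable 1 (ae_of_all _ fun ω => ?_)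
      simp only [hq]
      split_ifs <;> norm_num
    have hp : 0 < ∫ ω, q ω ∂P := by
      refine lt_of_le_of_ne (integral_nonneg hq0) fun h => ?_
      have h := h.symm
      rw [integral_eq_zero_iff_of_nonneg hq0 iq] at h
      have h1 : (fun ω => (N ω : ℝ) ^ 2) =ᵐ[P] fun ω => (N ω : ℝ) := by
        filter_upwards [h] with ω hω
        have h2 : ¬ 2 ≤ N ω := by
          intro h2
          simp [hq, h2] at hω
        have h3 : N ω = 0 ∨ N ω = 1 := by omega
        rcases h3 with h3 | h3 <;> simp [h3]
      rw [integral_congr_ae h1, hN1] at hN2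
      linarith
    set p := ∫ ω, q ω ∂P with hpdef
    have hAge : ∀ t : ℝ, 0 < t → p ≤ A t := by
      intro t ht
      exact integral_mono iq (iPsi _ (hxf t ht).1) fun ω => psiAux_ge _ (hxf t ht).1.1
    have hpos : ∀ᶠ t : ℝ in nhdsWithin 0 (Set.Ioi 0), 0 < t := self_mem_nhdsWithin
    have hid : Tendsto (fun t : ℝ => t) (nhdsWithin 0 (Set.Ioi 0)) (nhds 0) :=
      tendsto_id.mono_left nhdsWithin_le_nhds
    have hx1 : Tendsto xf (nhdsWithin 0 (Set.Ioi 0)) (nhds 1) := by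
      have hs : Tendsto (fun t : ℝ => Real.sqrt (t / p)) (nhdsWithin 0 (Set.Ioi 0)) (nhds 0) := by
        have := (Real.continuous_sqrt.tendsto (0 / p)).comp (hid.div_const p)
        simpa [Function.comp_def] using this
      have hy : Tendsto (fun t : ℝ => 1 - xf t) (nhdsWithin 0 (Set.Ioi 0)) (nhds 0) := by
        refine squeeze_zero' ?_ ?_ hs
        · filter_upwards [hpos] with t ht
          linarith [(hxf t ht).1.2]
        · filter_upwards [hpos] with t ht
          apply Real.le_sqrt_of_sq_le
          rw [le_div_iff₀ hp]
          have h1 := mul_le_mul_of_nonneg_left (hAge t ht) (sq_nonneg (1 - xf t))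
          have h2 := mul_le_mul_of_nonneg_left (hBle t ht) ht.le
          have h3 := hkey t ht
          linarith
      have := (tendsto_const_nhds (x := (1:ℝ))).sub hy
      simpa using this
    have hAlim : Tendsto A (nhdsWithin 0 (Set.Ioi 0)) (nhds (σ2 / 2)) := by
      have e : ∫ ω, psiAux (N ω) 1 ∂P = σ2 / 2 := by
        simp_rw [psiAux_one]
        rw [integral_div, integral_sub iN2 iN, hN1, hN2]
        ring
      rw [← e]
      refine tendsto_integral_filter_of_dominated_convergence (fun ω => (N ω : ℝ) ^ 2)
        (Eventually.of_forall fun t => (mF fun n => psiAux n (xf t)).aestronglyMeasurable)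
        ?_ iN2 (ae_of_all _ fun ω => ?_)
      · filter_upwards [hpos] with t ht
        refine ae_of_all _ fun ω => ?_
        rw [Real.norm_eq_abs, abs_of_nonneg (psiAux_nonneg _ (hxf t ht).1.1)]
        exact psiAux_le _ (hxf t ht).1.1 (hxf t ht).1.2
      · exact ((psiAux_cont (N ω)).tendsto 1).comp hx1
    have hBlim : Tendsto B (nhdsWithin 0 (Set.Ioi 0)) (nhds 1) := by
      rw [← hD1]
      refine tendsto_integral_filter_of_dominated_convergence D
        (Eventually.of_forall fun t => (mB t).aestronglyMeasurable)
        ?_ iD (ae_of_all _ fun ω => ?_)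
      · filter_upwards [hpos] with t ht using hBD t ht
      · have hd : HasDerivAt (fun t : ℝ => Real.exp (-t * D ω)) (-D ω) 0 := by
          have := (((hasDerivAt_id (0:ℝ)).neg).mul_const (D ω)).exp
          simpa using this
        have hd2 := (hasDerivAt_iff_tendsto_slope_zero.1 hd).mono_left
          (nhdsWithin_mono (0:ℝ) (fun t (ht : 0 < t) => ht.ne'))
        have h1 : Tendsto (fun t : ℝ => (1 - Real.exp (-t * D ω)) / t)
            (nhdsWithin 0 (Set.Ioi 0)) (nhds (D ω)) := by
          have h := hd2.neg
          rw [neg_neg] at h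
          refine h.congr fun t => ?_
          simp only [zero_add, neg_zero, zero_mul, Real.exp_zero, smul_eq_mul]
          ring
        have := h1.mul (hx1.pow (N ω))
        simpa using this
    have hfin : Tendsto (fun t => Real.sqrt (B t / A t * (σ2 / 2)))
        (nhdsWithin 0 (Set.Ioi 0)) (nhds 1) := by
      have h := (Real.continuous_sqrt.tendsto _).comp
        ((hBlim.div hAlim (by positivity)).mul_const (σ2 / 2))
      have e : 1 / (σ2 / 2) * (σ2 / 2) = 1 := by field_simp
      rw [e, Real.sqrt_one] at h
      exact h
    refine hfin.congr' ?_
    filter_upwards [hpos] with t ht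
    have hA0 : 0 < A t := hp.trans_le (hAge t ht)
    have h0 : 0 ≤ 1 - xf t := by linarith [(hxf t ht).1.2]
    have e : B t / A t * (σ2 / 2) = (1 - xf t) ^ 2 * (σ2 / (2 * t)) := by
      have := hkey t ht
      field_simp
      linarith
    rw [e, Real.sqrt_mul (sq_nonneg _), Real.sqrt_sq h0]
end

section
/- Let N be an ℕ-valued random variable with E[N] = 1 and E[N²] = 1 + σ² where σ² ∈ (0,∞), let D ≥ 0 be a random variable with E[D] = 1, and let W be a random variable with E[W²] < ∞, on a common probability space. For t > 0 let x_t ∈ (0,1) be the unique solution in [0,1] of x_t = E[e^{−tD} · x_t^N]. Then E[W] − E[e^{−tD} · x_t^{N−1} · W] = √(2t/σ²)·E[W·(N−1)] + o(t^{1/2}) as t → 0⁺, where x_t^{N−1} := x_t^N / x_t. -/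
open MeasureTheory ProbabilityTheory Filter

/-- Second order difference quotient of the power function at one. -/
def hPoly (n : ℕ) (x : ℝ) : ℝ := ∑ i ∈ Finset.range n, ∑ j ∈ Finset.range i, x ^ j

theorem geo_eq (n : ℕ) (x : ℝ) : (1 - x) * ∑ i ∈ Finset.range n, x ^ i = 1 - x ^ n := by
  induction n with
  | zero => simp
  | succ k ih => rw [Finset.sum_range_succ, mul_add, ih]; ring

theorem hPoly_eq (n : ℕ) (x : ℝ) : (1 - x) ^ 2 * hPoly n x = x ^ n - 1 + n * (1 - x) := by
  unfold hPoly
  induction n with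
  | zero => simp
  | succ k ih =>
    rw [Finset.sum_range_succ, mul_add, ih, pow_two, mul_assoc, geo_eq]
    push_cast
    ring

theorem geo_nonneg (n : ℕ) {x : ℝ} (h0 : 0 ≤ x) : 0 ≤ ∑ i ∈ Finset.range n, x ^ i :=
  Finset.sum_nonneg fun i _ => pow_nonneg h0 i

theorem geo_le (n : ℕ) {x : ℝ} (h0 : 0 ≤ x) (h1 : x ≤ 1) :
    ∑ i ∈ Finset.range n, x ^ i ≤ n := by
  calc _ ≤ ∑ i ∈ Finset.range n, (1 : ℝ) := Finset.sum_le_sum fun i _ => pow_le_one₀ h0 h1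
    _ = n := by simp

theorem hPoly_nonneg (n : ℕ) {x : ℝ} (h0 : 0 ≤ x) : 0 ≤ hPoly n x :=
  Finset.sum_nonneg fun i _ => geo_nonneg i h0

theorem hPoly_le (n : ℕ) {x : ℝ} (h0 : 0 ≤ x) (h1 : x ≤ 1) : hPoly n x ≤ (n : ℝ) ^ 2 := by
  calc hPoly n x ≤ ∑ i ∈ Finset.range n, (n : ℝ) := by
        refine Finset.sum_le_sum fun i hi => (geo_le i h0 h1).trans ?_
        exact_mod_cast (Finset.mem_range.1 hi).le
    _ = (n : ℝ) ^ 2 := by simp [pow_two]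

theorem hPoly_one (n : ℕ) : hPoly n 1 = ((n : ℝ) ^ 2 - n) / 2 := by
  unfold hPoly
  induction n with
  | zero => simp
  | succ k ih => rw [Finset.sum_range_succ, ih]; simp; ring

theorem one_le_hPoly {n : ℕ} (hn : 2 ≤ n) {x : ℝ} (h0 : 0 ≤ x) : 1 ≤ hPoly n x := by
  have := Finset.single_le_sum (f := fun i => ∑ j ∈ Finset.range i, x ^ j)
    (fun i _ => geo_nonneg i h0) (Finset.mem_range.2 (show 1 < n by omega))
  simpa [hPoly] using this

theorem hPoly_continuous (n : ℕ) : Continuous (hPoly n) := by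
  unfold hPoly; fun_prop

theorem exp_facts {t d : ℝ} (ht : 0 < t) (hd : 0 ≤ d) :
    0 ≤ 1 - Real.exp (-t * d) ∧ 1 - Real.exp (-t * d) ≤ 1 ∧ 1 - Real.exp (-t * d) ≤ t * d := by
  have h1 : Real.exp (-t * d) ≤ 1 := Real.exp_le_one_iff.2 (by nlinarith [mul_nonneg ht.le hd])
  have h2 := Real.add_one_le_exp (-t * d)
  have h3 := Real.exp_pos (-t * d)
  refine ⟨by linarith, by linarith, by linarith⟩

theorem exp_sqrt_bound {t d : ℝ} (ht : 0 < t) (hd : 0 ≤ d) :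
    (1 - Real.exp (-t * d)) / √t ≤ √d := by
  obtain ⟨h1, h2, h3⟩ := exp_facts ht hd
  rw [div_le_iff₀ (Real.sqrt_pos.2 ht), ← Real.sqrt_mul hd]
  apply Real.le_sqrt_of_sq_le
  nlinarith

theorem exp_quot_tendsto (d : ℝ) :
    Tendsto (fun t : ℝ => (1 - Real.exp (-t * d)) / t) (nhdsWithin 0 (Set.Ioi 0)) (nhds d) := by
  have h : HasDerivAt (fun t : ℝ => 1 - Real.exp (-t * d)) d 0 := by
    have h1 : HasDerivAt (fun t : ℝ => -t * d) (-1 * d) 0 := (hasDerivAt_id 0).neg.mul_const d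
    have := (h1.exp).const_sub 1
    simpa using this
  have h2 := h.tendsto_slope_zero_right
  refine h2.congr fun t => ?_
  simp [div_eq_inv_mul]

/-- Lemma 26 of the paper.  Let `N` be `ℕ`-valued with `E[N] = 1`,
`E[N²] = 1 + σ²`, `σ² ∈ (0,∞)`, `D ≥ 0` with `E[D] = 1`, and `W` with `E[W²] < ∞`.  With
`x_t ∈ (0,1)` the unique fixed point `x_t = E[e^{−tD}·x_t^N]`,
`E[W] − E[e^{−tD}·x_t^{N−1}·W] = √(2t/σ²)·E[W·(N−1)] + o(t^{1/2})` as `t → 0⁺`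
(where `x_t^{N−1} = x_t^N / x_t`). -/
theorem speed_cv_expectation
    {Ω : Type*} [MeasurableSpace Ω] (P : Measure Ω) [IsProbabilityMeasure P]
    (N : Ω → ℕ) (D : Ω → ℝ) (hNm : Measurable N) (hDm : Measurable D)
    (σ2 : ℝ) (hσ : 0 < σ2)
    (hN1 : ∫ ω, (N ω : ℝ) ∂P = 1)
    (hN2 : ∫ ω, ((N ω : ℝ)) ^ 2 ∂P = 1 + σ2)
    (hD0 : ∀ᵐ ω ∂P, 0 ≤ D ω) (hD1 : ∫ ω, D ω ∂P = 1)
    (W : Ω → ℝ) (hWm : Measurable W) (hW2 : Integrable (fun ω => W ω ^ 2) P)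
    (xf : ℝ → ℝ)
    (hxf : ∀ t : ℝ, 0 < t → xf t ∈ Set.Ioo (0 : ℝ) 1 ∧
        xf t = ∫ ω, Real.exp (-t * D ω) * (xf t) ^ (N ω) ∂P) :
    Asymptotics.IsLittleO (nhdsWithin 0 (Set.Ioi 0))
      (fun t : ℝ =>
        (∫ ω, W ω ∂P) -
          (∫ ω, Real.exp (-t * D ω) * ((xf t) ^ (N ω) / xf t) * W ω ∂P) -
          Real.sqrt (2 * t / σ2) * ∫ ω, W ω * ((N ω : ℝ) - 1) ∂P)
      (fun t : ℝ => Real.sqrt t) := by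
  have iN : Integrable (fun ω => (N ω : ℝ)) P := by
    by_contra h; rw [integral_undef h] at hN1; norm_num at hN1
  have iN2 : Integrable (fun ω => (N ω : ℝ) ^ 2) P := by
    by_contra h; rw [integral_undef h] at hN2; linarith
  have iD : Integrable D P := by
    by_contra h; rw [integral_undef h] at hD1; norm_num at hD1
  have mN : Measurable (fun ω => (N ω : ℝ)) := measurable_from_nat.comp hNm
  have mfun : ∀ f : ℕ → ℝ, Measurable (fun ω => f (N ω)) := fun f => measurable_from_nat.comp hNm
  have iW : Integrable W P := by
    refine Integrable.mono' ((integrable_const (1 : ℝ)).add hW2) hWm.aestronglyMeasurable ?_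
    refine Eventually.of_forall fun ω => ?_
    simp only [Real.norm_eq_abs, Pi.add_apply]
    nlinarith [sq_abs (W ω), sq_nonneg (|W ω| - 1), abs_nonneg (W ω)]
  have iWN : Integrable (fun ω => |W ω| * ((N ω : ℝ) + 1)) P := by
    refine Integrable.mono' ((hW2.add iN2).add (iW.abs)) (by fun_prop) ?_
    refine Eventually.of_forall fun ω => ?_
    have hn : (0 : ℝ) ≤ N ω := Nat.cast_nonneg _
    simp only [Real.norm_eq_abs, Pi.add_apply]
    rw [abs_of_nonneg (by positivity)]
    nlinarith [sq_abs (W ω), sq_nonneg (|W ω| - N ω), abs_nonneg (W ω)]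
  set L : Filter ℝ := nhdsWithin 0 (Set.Ioi 0) with hL
  have hpos : ∀ᶠ t in L, 0 < t := self_mem_nhdsWithin
  have ht0 : Tendsto (fun t : ℝ => t) L (nhds 0) := tendsto_nhdsWithin_of_tendsto_nhds tendsto_id
  have mexp : ∀ t, Measurable (fun ω => Real.exp (-t * D ω)) := fun t => by fun_prop
  have iH : ∀ x : ℝ, 0 ≤ x → x ≤ 1 → Integrable (fun ω => hPoly (N ω) x) P := by
    intro x h0 h1
    refine Integrable.mono' iN2 (mfun fun n => hPoly n x).aestronglyMeasurable ?_
    refine Eventually.of_forall fun ω => ?_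
    rw [Real.norm_eq_abs, abs_of_nonneg (hPoly_nonneg _ h0)]
    exact hPoly_le _ h0 h1
  have iX : ∀ x : ℝ, 0 ≤ x → x ≤ 1 → Integrable (fun ω => x ^ N ω) P := by
    intro x h0 h1
    refine Integrable.mono' (integrable_const (1 : ℝ)) (mfun fun n => x ^ n).aestronglyMeasurable ?_
    refine Eventually.of_forall fun ω => ?_
    rw [Real.norm_eq_abs, abs_of_nonneg (pow_nonneg h0 _)]
    exact pow_le_one₀ h0 h1
  have iEX : ∀ t x : ℝ, 0 < t → 0 ≤ x → x ≤ 1 →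
      Integrable (fun ω => Real.exp (-t * D ω) * x ^ N ω) P := by
    intro t x ht h0 h1
    refine Integrable.mono' (integrable_const (1 : ℝ))
      ((mexp t).mul (mfun fun n => x ^ n)).aestronglyMeasurable ?_
    filter_upwards [hD0] with ω hd
    obtain ⟨e1, e2, e3⟩ := exp_facts ht hd
    rw [Real.norm_eq_abs, abs_of_nonneg (by positivity)]
    exact mul_le_one₀ (by linarith) (pow_nonneg h0 _) (pow_le_one₀ h0 h1)
  -- key identity
  have key : ∀ t, 0 < t → (1 - xf t) ^ 2 * ∫ ω, hPoly (N ω) (xf t) ∂P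
      = ∫ ω, (1 - Real.exp (-t * D ω)) * (xf t) ^ N ω ∂P := by
    intro t ht
    obtain ⟨⟨h0, h1⟩, he⟩ := hxf t ht
    rw [← integral_const_mul]
    simp_rw [hPoly_eq, sub_mul, one_mul]
    rw [integral_sub (iX _ h0.le h1.le) (iEX t _ ht h0.le h1.le), ← he,
      integral_add (f := fun ω => xf t ^ N ω - 1)
        ((iX _ h0.le h1.le).sub (integrable_const _)) (iN.mul_const _),
      integral_sub (iX _ h0.le h1.le) (integrable_const _), integral_mul_const, hN1]
    simp
  -- upper bound
  have up : ∀ t, 0 < t → (1 - xf t) ^ 2 * ∫ ω, hPoly (N ω) (xf t) ∂P ≤ t := by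
    intro t ht
    obtain ⟨⟨h0, h1⟩, he⟩ := hxf t ht
    rw [key t ht]
    calc _ ≤ ∫ ω, t * D ω ∂P := by
          refine integral_mono_ae ?_ (iD.const_mul t) ?_
          · simp_rw [sub_mul, one_mul]
            exact (iX _ h0.le h1.le).sub (iEX t _ ht h0.le h1.le)
          · filter_upwards [hD0] with ω hd
            obtain ⟨e1, e2, e3⟩ := exp_facts ht hd
            exact (mul_le_of_le_one_right e1 (pow_le_one₀ h0.le h1.le)).trans e3
      _ = t := by rw [integral_const_mul, hD1, mul_one]
  set S : Set Ω := {ω | 2 ≤ N ω} with hS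
  have mS : MeasurableSet S := hNm (measurableSet_Ici (a := 2))
  have hp : 0 < P.real S := by
    rw [measureReal_def, ENNReal.toReal_pos_iff]
    refine ⟨pos_iff_ne_zero.2 fun h => ?_, measure_lt_top _ _⟩
    have : ∫ ω, (N ω : ℝ) ^ 2 ∂P = ∫ ω, (N ω : ℝ) ∂P := by
      refine integral_congr_ae ?_
      have h' : ∀ᵐ ω ∂P, ω ∉ S := measure_eq_zero_iff_ae_notMem.1 h
      filter_upwards [h'] with ω hω
      have : N ω < 2 := by simpa [hS] using hω
      interval_cases N ω <;> simp
    linarith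
  have low : ∀ x : ℝ, 0 ≤ x → x ≤ 1 → P.real S ≤ ∫ ω, hPoly (N ω) x ∂P := by
    intro x h0 h1
    rw [← integral_indicator_one mS]
    refine integral_mono ((integrable_const (1 : ℝ)).indicator mS) (iH x h0 h1) fun ω => ?_
    by_cases hω : ω ∈ S
    · rw [Set.indicator_of_mem hω]; exact one_le_hPoly hω h0
    · rw [Set.indicator_of_notMem hω]; exact hPoly_nonneg _ h0
  have hx1 : Tendsto xf L (nhds 1) := by
    have hsq : Tendsto (fun t => (1 - xf t) ^ 2) L (nhds 0) := by
      have h2 : Tendsto (fun t : ℝ => t / P.real S) L (nhds 0) := by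
        simpa using ht0.div_const (P.real S)
      refine squeeze_zero' (Eventually.of_forall fun t => sq_nonneg _) ?_ h2
      filter_upwards [hpos] with t ht
      obtain ⟨⟨h0, h1⟩, he⟩ := hxf t ht
      rw [le_div_iff₀ hp]
      exact (mul_le_mul_of_nonneg_left (low _ h0.le h1.le) (sq_nonneg _)).trans (up t ht)
    have h3 := (Real.continuous_sqrt.tendsto 0).comp hsq
    have h4 : Tendsto (fun t => 1 - √((1 - xf t) ^ 2)) L (nhds 1) := by
      simpa using h3.const_sub 1
    refine h4.congr' ?_
    filter_upwards [hpos] with t ht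
    obtain ⟨⟨h0, h1⟩, he⟩ := hxf t ht
    rw [Real.sqrt_sq (by linarith)]; ring
  have hxh : ∀ᶠ t in L, 1 / 2 < xf t := hx1.eventually (lt_mem_nhds (by norm_num))
  have limH : Tendsto (fun t => ∫ ω, hPoly (N ω) (xf t) ∂P) L (nhds (σ2 / 2)) := by
    have e : σ2 / 2 = ∫ ω, hPoly (N ω) 1 ∂P := by
      simp_rw [hPoly_one]
      rw [integral_div, integral_sub iN2 iN, hN1, hN2]; ring
    rw [e]
    refine tendsto_integral_filter_of_dominated_convergence (fun ω => (N ω : ℝ) ^ 2) ?_ ?_ iN2 ?_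
    · exact Eventually.of_forall fun t => (mfun fun n => hPoly n (xf t)).aestronglyMeasurable
    · filter_upwards [hpos] with t ht
      obtain ⟨⟨h0, h1⟩, he⟩ := hxf t ht
      refine Eventually.of_forall fun ω => ?_
      rw [Real.norm_eq_abs, abs_of_nonneg (hPoly_nonneg _ h0.le)]
      exact hPoly_le _ h0.le h1.le
    · exact Eventually.of_forall fun ω => ((hPoly_continuous (N ω)).tendsto 1).comp hx1
  have limD : Tendsto (fun t => ∫ ω, (1 - Real.exp (-t * D ω)) / t * (xf t) ^ N ω ∂P) L (nhds 1) := by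
    rw [show nhds (1 : ℝ) = nhds (∫ ω, D ω ∂P) by rw [hD1]]
    refine tendsto_integral_filter_of_dominated_convergence D ?_ ?_ iD ?_
    · exact Eventually.of_forall fun t =>
        (((measurable_const.sub (mexp t)).div_const t).mul
          (mfun fun n => xf t ^ n)).aestronglyMeasurable
    · filter_upwards [hpos] with t ht
      obtain ⟨⟨h0, h1⟩, he⟩ := hxf t ht
      filter_upwards [hD0] with ω hd
      obtain ⟨e1, e2, e3⟩ := exp_facts ht hd
      have e4 : 0 ≤ (1 - Real.exp (-t * D ω)) / t := div_nonneg e1 ht.le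
      rw [Real.norm_eq_abs, abs_of_nonneg (mul_nonneg e4 (pow_nonneg h0.le _))]
      refine (mul_le_of_le_one_right e4 (pow_le_one₀ h0.le h1.le)).trans ?_
      rw [div_le_iff₀ ht]; linarith
    · refine Eventually.of_forall fun ω => ?_
      simpa using (exp_quot_tendsto (D ω)).mul (hx1.pow (N ω))
  have limY2 : Tendsto (fun t => (1 - xf t) ^ 2 / t) L (nhds (2 / σ2)) := by
    have h := limD.div limH (by positivity)
    rw [one_div_div] at h
    refine h.congr' ?_
    filter_upwards [hpos] with t ht
    obtain ⟨⟨h0, h1⟩, he⟩ := hxf t ht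
    have hI : (∫ ω, hPoly (N ω) (xf t) ∂P) ≠ 0 := (hp.trans_le (low _ h0.le h1.le)).ne'
    have k := key t ht
    have : ∫ ω, (1 - Real.exp (-t * D ω)) / t * (xf t) ^ N ω ∂P
        = (∫ ω, (1 - Real.exp (-t * D ω)) * (xf t) ^ N ω ∂P) / t := by
      rw [← integral_div]; congr 1; ext ω; ring
    simp only [Pi.div_apply]
    rw [this, ← k]
    field_simp
  have limY : Tendsto (fun t => (1 - xf t) / √t) L (nhds (√(2 / σ2))) := by
    refine ((Real.continuous_sqrt.tendsto _).comp limY2).congr' ?_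
    filter_upwards [hpos] with t ht
    obtain ⟨⟨h0, h1⟩, he⟩ := hxf t ht
    simp only [Function.comp]
    rw [Real.sqrt_div (sq_nonneg _), Real.sqrt_sq (by linarith)]
  -- first piece
  have limA : Tendsto (fun t => ∫ ω, (1 - Real.exp (-t * D ω)) / √t * (xf t) ^ N ω * W ω ∂P)
      L (nhds 0) := by
    rw [← integral_zero Ω ℝ (μ := P)]
    refine tendsto_integral_filter_of_dominated_convergence (fun ω => W ω ^ 2 + D ω) ?_ ?_
      (hW2.add iD) ?_
    · exact Eventually.of_forall fun t =>
        ((((measurable_const.sub (mexp t)).div_const √t).mul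
          (mfun fun n => xf t ^ n)).mul hWm).aestronglyMeasurable
    · filter_upwards [hpos] with t ht
      obtain ⟨⟨h0, h1⟩, he⟩ := hxf t ht
      filter_upwards [hD0] with ω hd
      obtain ⟨e1, e2, e3⟩ := exp_facts ht hd
      have e4 : 0 ≤ (1 - Real.exp (-t * D ω)) / √t := div_nonneg e1 (Real.sqrt_nonneg _)
      rw [norm_mul, Real.norm_eq_abs, abs_of_nonneg (mul_nonneg e4 (pow_nonneg h0.le _))]
      have e5 := (mul_le_of_le_one_right e4 (pow_le_one₀ h0.le h1.le (n := N ω))).trans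
        (exp_sqrt_bound ht hd)
      refine (mul_le_mul_of_nonneg_right e5 (norm_nonneg _)).trans ?_
      rw [Real.norm_eq_abs]
      nlinarith [sq_abs (W ω), Real.sq_sqrt hd, sq_nonneg (|W ω| - √(D ω)), abs_nonneg (W ω),
        sq_nonneg (|W ω|), sq_nonneg (√(D ω))]
    · refine Eventually.of_forall fun ω => ?_
      have hs : Tendsto (fun t : ℝ => √t) L (nhds 0) := by
        have h := (Real.continuous_sqrt.tendsto 0).comp ht0
        rw [Real.sqrt_zero] at h
        exact h
      have := (((exp_quot_tendsto (D ω)).mul hs).mul (hx1.pow (N ω))).mul_const (W ω)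
      simp only [mul_zero, zero_mul] at this
      refine this.congr' ?_
      filter_upwards [hpos] with t ht
      have hst : √t ≠ 0 := (Real.sqrt_pos.2 ht).ne'
      have : (1 - Real.exp (-t * D ω)) / t * √t = (1 - Real.exp (-t * D ω)) / √t := by
        rw [div_mul_eq_mul_div, div_eq_div_iff ht.ne' hst, mul_assoc, Real.mul_self_sqrt ht.le]
      rw [this]
  -- second piece
  have bndB : ∀ x : ℝ, 0 ≤ x → x ≤ 1 → ∀ ω,
      ‖W ω * ((∑ i ∈ Finset.range (N ω), x ^ i) - 1)‖ ≤ |W ω| * ((N ω : ℝ) + 1) := by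
    intro x h0 h1 ω
    rw [norm_mul, Real.norm_eq_abs, Real.norm_eq_abs]
    refine mul_le_mul_of_nonneg_left ?_ (abs_nonneg _)
    have a := geo_nonneg (N ω) h0
    have b := geo_le (N ω) h0 h1
    rw [abs_le]; constructor <;> linarith
  have mB : ∀ x : ℝ, Measurable (fun ω => W ω * ((∑ i ∈ Finset.range (N ω), x ^ i) - 1)) :=
    fun x => hWm.mul (mfun fun n => (∑ i ∈ Finset.range n, x ^ i) - 1)
  have limB : Tendsto (fun t => ∫ ω, W ω * ((∑ i ∈ Finset.range (N ω), (xf t) ^ i) - 1) ∂P) L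
      (nhds (∫ ω, W ω * ((N ω : ℝ) - 1) ∂P)) := by
    refine tendsto_integral_filter_of_dominated_convergence _ ?_ ?_ iWN ?_
    · exact Eventually.of_forall fun t => (mB (xf t)).aestronglyMeasurable
    · filter_upwards [hpos] with t ht
      obtain ⟨⟨h0, h1⟩, he⟩ := hxf t ht
      exact Eventually.of_forall (bndB _ h0.le h1.le)
    · refine Eventually.of_forall fun ω => ?_
      have : Tendsto (fun t => ∑ i ∈ Finset.range (N ω), (xf t) ^ i) L
          (nhds (∑ i ∈ Finset.range (N ω), (1 : ℝ) ^ i)) :=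
        tendsto_finsetSum _ fun i _ => hx1.pow i
      simp only [one_pow, Finset.sum_const, Finset.card_range, nsmul_eq_mul, mul_one] at this
      exact (this.sub_const 1).const_mul (W ω)
  have lim := (((limA.add (limY.mul limB)).div hx1 one_ne_zero).sub_const
    (√(2 / σ2) * ∫ ω, W ω * ((N ω : ℝ) - 1) ∂P))
  rw [zero_add, div_one, sub_self] at lim
  rw [Asymptotics.isLittleO_iff_tendsto']
  swap
  · filter_upwards [hpos] with t ht h
    exact absurd h (Real.sqrt_pos.2 ht).ne'
  refine lim.congr' ?_
  filter_upwards [hpos] with t ht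
  obtain ⟨⟨h0, h1⟩, he⟩ := hxf t ht
  have hst : √t ≠ 0 := (Real.sqrt_pos.2 ht).ne'
  have i1 : Integrable (fun ω => Real.exp (-t * D ω) * ((xf t) ^ N ω / xf t) * W ω) P := by
    refine Integrable.mono' (iW.abs.const_mul (1 / xf t))
      (((mexp t).mul (mfun fun n => xf t ^ n / xf t)).mul hWm).aestronglyMeasurable ?_
    filter_upwards [hD0] with ω hd
    obtain ⟨e1, e2, e3⟩ := exp_facts ht hd
    rw [norm_mul, Real.norm_eq_abs, Real.norm_eq_abs, abs_of_nonneg (by positivity)]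
    refine mul_le_mul_of_nonneg_right ?_ (abs_nonneg _)
    rw [← mul_div_assoc]
    refine div_le_div_of_nonneg_right ?_ h0.le
    exact mul_le_one₀ (by linarith) (pow_nonneg h0.le _) (pow_le_one₀ h0.le h1.le)
  have i2 : Integrable (fun ω => W ω * ((∑ i ∈ Finset.range (N ω), (xf t) ^ i) - 1)) P :=
    Integrable.mono' iWN (mB _).aestronglyMeasurable (Eventually.of_forall (bndB _ h0.le h1.le))
  have pt : ∀ ω, (1 - Real.exp (-t * D ω)) / √t * (xf t) ^ N ω * W ω
      = xf t / √t * (W ω - Real.exp (-t * D ω) * ((xf t) ^ N ω / xf t) * W ω)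
        - (1 - xf t) / √t * (W ω * ((∑ i ∈ Finset.range (N ω), (xf t) ^ i) - 1)) := by
    intro ω
    have g := geo_eq (N ω) (xf t)
    have hx0 : xf t ≠ 0 := h0.ne'
    have : (1 - xf t) / √t * (W ω * ((∑ i ∈ Finset.range (N ω), (xf t) ^ i) - 1))
        = W ω / √t * ((1 - (xf t) ^ N ω) - (1 - xf t)) := by rw [← g]; ring
    rw [this]
    field_simp
    ring
  have eA : ∫ ω, (1 - Real.exp (-t * D ω)) / √t * (xf t) ^ N ω * W ω ∂P
      = xf t / √t * ((∫ ω, W ω ∂P) -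
          ∫ ω, Real.exp (-t * D ω) * ((xf t) ^ N ω / xf t) * W ω ∂P)
        - (1 - xf t) / √t * ∫ ω, W ω * ((∑ i ∈ Finset.range (N ω), (xf t) ^ i) - 1) ∂P := by
    have i3 : Integrable (fun ω => W ω - Real.exp (-t * D ω) * ((xf t) ^ N ω / xf t) * W ω) P :=
      iW.sub i1
    rw [integral_congr_ae (Eventually.of_forall pt),
      integral_sub (i3.const_mul _) (i2.const_mul _), integral_const_mul,
      integral_const_mul, integral_sub iW i1]
  simp only [Pi.div_apply]
  rw [eA, mul_div_right_comm, Real.sqrt_mul' _ ht.le]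
  have hx0 : xf t ≠ 0 := h0.ne'
  field_simp
  ring
end

section
/- Let a ∈ ℝ and let y : (a,∞) → ℝ be twice differentiable with y(t) > 0 and y''(t) = y(t)² + y(t) for all t ∈ (a,∞), and suppose y is bounded. Then y(t) → 0 and y'(t) → 0 as t → ∞, and y'(t) = −√((2/3)·y(t)³ + y(t)²) for every t ∈ (a,∞). -/
open Filter

/-- Appendix B of the paper, first part: study of the ODE `y'' = y² + y`.
Let `y : (a,∞) → ℝ` be twice differentiable, positive, bounded, with `y'' = y² + y`.  Then
`y(t) → 0` and `y'(t) → 0` as `t → ∞`, and `y' = −√((2/3)·y³ + y²)` on `(a,∞)`. -/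
theorem ode_bounded_solution
    (a : ℝ) (y y' : ℝ → ℝ)
    (hderiv : ∀ t ∈ Set.Ioi a, HasDerivAt y (y' t) t ∧ HasDerivAt y' (y t ^ 2 + y t) t)
    (hpos : ∀ t ∈ Set.Ioi a, 0 < y t)
    (hbdd : ∃ C : ℝ, ∀ t ∈ Set.Ioi a, y t ≤ C) :
    Tendsto y atTop (nhds 0) ∧ Tendsto y' atTop (nhds 0) ∧
      ∀ t ∈ Set.Ioi a, y' t = -Real.sqrt (2 / 3 * y t ^ 3 + y t ^ 2) := by
  obtain ⟨C, hC⟩ := hbdd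
  have mvt : ∀ f f' : ℝ → ℝ, (∀ t ∈ Set.Ioi a, HasDerivAt f (f' t) t) → ∀ s t, a < s → s < t →
      ∃ c, s < c ∧ c < t ∧ f t - f s = f' c * (t - s) := by
    intro f f' hf s t hs hst
    obtain ⟨c, hc, h⟩ := exists_hasDerivAt_eq_slope f f' hst
      (fun x hx => (hf x (lt_of_lt_of_le hs hx.1)).continuousAt.continuousWithinAt)
      (fun x hx => hf x (lt_trans hs hx.1))
    refine ⟨c, hc.1, hc.2, ?_⟩
    rw [h, div_mul_cancel₀ _ (by linarith)]
  have m1 := mvt y y' (fun t ht => (hderiv t ht).1)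
  have m2 := mvt y' (fun t => y t ^ 2 + y t) (fun t ht => (hderiv t ht).2)
  have hmono : ∀ s t, a < s → s < t → y' s < y' t := by
    intro s t hs hst
    obtain ⟨c, h1, h2, h⟩ := m2 s t hs hst
    have hc := hpos c (lt_trans hs h1)
    have : 0 < (y c ^ 2 + y c) * (t - s) := mul_pos (by positivity) (by linarith)
    linarith
  have hneg : ∀ t, a < t → y' t ≤ 0 := by
    intro s hs
    by_contra! hp
    have hys := hpos s hs
    have hCs := hC s hs
    have hd : 0 < C / y' s := div_pos (by linarith) hp
    obtain ⟨c, h1, h2, h⟩ := m1 s (s + C / y' s) hs (by linarith)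
    have h3 := hmono s c hs h1
    have h4 : y' s * (C / y' s) = C := by field_simp
    have h5 := hC (s + C / y' s) (show a < _ by linarith)
    have h6 := mul_lt_mul_of_pos_right h3 hd
    rw [add_sub_cancel_left] at h
    linarith
  have hanti : ∀ s t, a < s → s < t → y t ≤ y s := by
    intro s t hs hst
    obtain ⟨c, h1, h2, h⟩ := m1 s t hs hst
    have := mul_nonneg (neg_nonneg.2 (hneg c (lt_trans hs h1))) (sub_nonneg.2 hst.le)
    linarith
  have hlim : ∀ K : ℝ, Tendsto (fun t : ℝ => K / (t - (a + 1))) atTop (nhds 0) := by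
    intro K
    exact Tendsto.const_div_atTop (tendsto_atTop_add_const_right _ (-(a+1)) tendsto_id) K
  have ha1 : a < a + 1 := by linarith
  have hy'0 : Tendsto y' atTop (nhds 0) := by
    have h0 := (hlim (y (a + 1))).neg
    rw [neg_zero] at h0
    refine tendsto_of_tendsto_of_tendsto_of_le_of_le' h0 tendsto_const_nhds ?_ ?_
    · filter_upwards [eventually_gt_atTop (a + 1)] with t ht
      obtain ⟨c, h1, h2, h⟩ := m1 (a + 1) t ha1 ht
      have h3 := hmono c t (by linarith) h2
      have h4 := hpos t (lt_trans ha1 ht)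
      have h5 : 0 < t - (a + 1) := by linarith
      have h6 := mul_lt_mul_of_pos_right h3 h5
      rw [neg_le, le_div_iff₀ h5]
      linarith
    · filter_upwards [eventually_gt_atTop (a + 1)] with t ht
      exact hneg t (lt_trans ha1 ht)
  have hy0 : Tendsto y atTop (nhds 0) := by
    refine tendsto_of_tendsto_of_tendsto_of_le_of_le' tendsto_const_nhds
      (hlim (-y' (a + 1))) ?_ ?_
    · filter_upwards [eventually_gt_atTop (a + 1)] with t ht
      exact (hpos t (lt_trans ha1 ht)).le
    · filter_upwards [eventually_gt_atTop (a + 1)] with t ht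
      obtain ⟨c, h1, h2, h⟩ := m2 (a + 1) t ha1 ht
      have h3 := hanti c t (by linarith) h2
      have h4 := hneg t (lt_trans ha1 ht)
      have h5 : 0 < t - (a + 1) := by linarith
      have h6 : y t * (t - (a + 1)) ≤ (y c ^ 2 + y c) * (t - (a + 1)) :=
        mul_le_mul_of_nonneg_right (by nlinarith [sq_nonneg (y c)]) h5.le
      rw [le_div_iff₀ h5]
      linarith
  refine ⟨hy0, hy'0, fun t ht => ?_⟩
  have m3 := mvt (fun t => y' t ^ 2 - (2 / 3 * y t ^ 3 + y t ^ 2)) (fun _ => 0) (by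
    intro t ht
    obtain ⟨h1, h2⟩ := hderiv t ht
    have := (h2.pow 2).sub (((h1.pow 3).const_mul (2 / 3)).add (h1.pow 2))
    refine HasDerivAt.congr_deriv this ?_
    push_cast
    ring)
  have hE : Tendsto (fun t => y' t ^ 2 - (2 / 3 * y t ^ 3 + y t ^ 2)) atTop (nhds 0) := by
    have := (hy'0.pow 2).sub (((hy0.pow 3).const_mul (2 / 3)).add (hy0.pow 2))
    simpa using this
  have hE2 : y' t ^ 2 - (2 / 3 * y t ^ 3 + y t ^ 2) = 0 := by
    refine tendsto_nhds_unique (Tendsto.congr' ?_ tendsto_const_nhds) hE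
    filter_upwards [eventually_gt_atTop t] with s hs
    obtain ⟨c, _, _, h⟩ := m3 t s ht hs
    simp only [zero_mul] at h
    linarith
  rw [← sub_eq_zero.1 hE2, Real.sqrt_sq_eq_abs, abs_of_nonpos (hneg t ht), neg_neg]
end

section
/- There exists exactly one twice-differentiable function ψ : (0,∞) → ℝ such that ψ(t) > 0 and ψ''(t) = ψ(t)² + ψ(t) for all t > 0, ψ(t) → ∞ as t → 0⁺, and ψ(t) → 0 as t → ∞. Moreover this ψ satisfies t²·ψ(t) → 6 and ψ(t) − 6/t² → −1/2 as t → 0⁺, and there exists C ∈ (0,∞) such that e^t · ψ(t) → C as t → ∞. -/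
open Filter

/-- `ψ` is a positive solution of `ψ'' = ψ² + ψ` on `(0,∞)` with `ψ(t) → ∞` as `t → 0⁺` and
`ψ(t) → 0` as `t → ∞`. -/
def psiCond (ψ : ℝ → ℝ) : Prop :=
  (∀ t ∈ Set.Ioi (0 : ℝ), 0 < ψ t) ∧
  (∃ ψ' : ℝ → ℝ, ∀ t ∈ Set.Ioi (0 : ℝ),
      HasDerivAt ψ (ψ' t) t ∧ HasDerivAt ψ' (ψ t ^ 2 + ψ t) t) ∧
  Tendsto ψ (nhdsWithin 0 (Set.Ioi 0)) atTop ∧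
  Tendsto ψ atTop (nhds 0)


lemma psi_const_aux (f : ℝ → ℝ) (hf : ∀ t : ℝ, 0 < t → HasDerivAt f 0 t) (a b : ℝ)
    (ha : 0 < a) (hb : 0 < b) : f a = f b := by
  refine IsOpen.is_const_of_deriv_eq_zero (s := Set.Ioi (0:ℝ)) isOpen_Ioi
    (convex_Ioi (0:ℝ)).isPreconnected ?_ ?_ ha hb
  · intro t ht
    exact (hf t ht).differentiableAt.differentiableWithinAt
  · intro t ht
    exact (hf t ht).deriv

/-- The explicit solution. -/
noncomputable def psiSol (t : ℝ) : ℝ := 6 * Real.exp t / (Real.exp t - 1) ^ 2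

lemma psiSol_exp_pos {t : ℝ} (ht : 0 < t) : 0 < Real.exp t - 1 := by
  have := Real.add_one_lt_exp ht.ne'
  linarith

lemma psi_s_tendsto : Tendsto (fun t : ℝ => (Real.exp t - 1 - t - t ^ 2 / 2) / t ^ 3)
    (nhdsWithin 0 (Set.Ioi 0)) (nhds (1 / 6)) := by
  have hid : Tendsto (fun t : ℝ => t) (nhdsWithin 0 (Set.Ioi 0)) (nhds 0) :=
    tendsto_nhdsWithin_of_tendsto_nhds tendsto_id
  rw [tendsto_iff_norm_sub_tendsto_zero]
  refine squeeze_zero' (Eventually.of_forall fun t => norm_nonneg _) ?_ hid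
  filter_upwards [Ioo_mem_nhdsGT (show (0:ℝ) < 1 by norm_num)] with t ht
  obtain ⟨h0, h1⟩ := ht
  have hb := Real.exp_bound (x := t) (by rw [abs_of_pos h0]; exact h1.le) (n := 4) (by norm_num)
  rw [abs_of_pos h0] at hb
  simp only [Finset.sum_range_succ, Finset.sum_range_zero, Nat.factorial] at hb
  norm_num at hb
  have e : (Real.exp t - 1 - t - t ^ 2 / 2) / t ^ 3 - 1 / 6
      = (Real.exp t - (1 + t + t ^ 2 / 2 + t ^ 3 / 6)) / t ^ 3 := by
    field_simp
    ring
  rw [e, norm_div, Real.norm_eq_abs, Real.norm_eq_abs, abs_of_pos (pow_pos h0 3),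
    div_le_iff₀ (pow_pos h0 3)]
  have h4 : 0 < t ^ 4 := pow_pos h0 4
  nlinarith

lemma psiSol_asymp0 : Tendsto (fun t : ℝ => t ^ 2 * psiSol t) (nhdsWithin 0 (Set.Ioi 0)) (nhds 6)
    ∧ Tendsto (fun t : ℝ => psiSol t - 6 / t ^ 2) (nhdsWithin 0 (Set.Ioi 0))
      (nhds (-(1 / 2))) := by
  have hid : Tendsto (fun t : ℝ => t) (nhdsWithin 0 (Set.Ioi 0)) (nhds 0) :=
    tendsto_nhdsWithin_of_tendsto_nhds tendsto_id
  have hs := psi_s_tendsto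
  set s : ℝ → ℝ := fun t => (Real.exp t - 1 - t - t ^ 2 / 2) / t ^ 3 with hsdef
  have hexp : ∀ t : ℝ, 0 < t → Real.exp t = 1 + t + t ^ 2 / 2 + t ^ 3 * s t := by
    intro t ht
    simp only [hsdef]
    field_simp
    ring
  have hq : Tendsto (fun t : ℝ => 1 + t / 2 + t ^ 2 * s t) (nhdsWithin 0 (Set.Ioi 0))
      (nhds (1 + 0 / 2 + 0 ^ 2 * (1 / 6))) :=
    ((hid.div_const 2).const_add 1).add ((hid.pow 2).mul hs)
  have hqp : ∀ t : ℝ, 0 < t → Real.exp t - 1 = t * (1 + t / 2 + t ^ 2 * s t) := by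
    intro t ht
    rw [hexp t ht]; ring
  have hqne : ∀ t : ℝ, 0 < t → (1 + t / 2 + t ^ 2 * s t) ≠ 0 := by
    intro t ht h
    have := psiSol_exp_pos ht
    rw [hqp t ht, h] at this
    simp at this
  have hE : Tendsto (fun t : ℝ => Real.exp t) (nhdsWithin 0 (Set.Ioi 0)) (nhds (Real.exp 0)) :=
    (Real.continuous_exp.tendsto 0).comp hid
  constructor
  · have h := (hE.const_mul 6).div (hq.pow 2) (by norm_num)
    have h6 : 6 * Real.exp 0 / (1 + 0 / 2 + 0 ^ 2 * (1 / 6)) ^ 2 = (6:ℝ) := by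
      rw [Real.exp_zero]; norm_num
    rw [h6] at h
    refine h.congr' ?_
    filter_upwards [self_mem_nhdsWithin] with t ht
    have ht : 0 < t := ht
    have h1 := hqne t ht
    have h2 := hqp t ht
    simp only [Pi.div_apply, psiSol]
    rw [h2]
    generalize 1 + t / 2 + t ^ 2 * s t = q at *
    field_simp
  · have hn : Tendsto (fun t : ℝ => 6 * (1 / 2 + t * s t
        - (1 / 4 + 2 * s t + t * s t + t ^ 2 * s t ^ 2))) (nhdsWithin 0 (Set.Ioi 0))
        (nhds (6 * (1 / 2 + 0 * (1 / 6)
        - (1 / 4 + 2 * (1 / 6) + 0 * (1 / 6) + 0 ^ 2 * (1 / 6) ^ 2)))) :=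
      (((hid.mul hs).const_add _).sub
        ((((hs.const_mul 2).const_add _).add (hid.mul hs)).add ((hid.pow 2).mul (hs.pow 2)))).const_mul 6
    have h := hn.div (hq.pow 2) (by norm_num)
    have h6 : (6 * (1 / 2 + 0 * (1 / 6)
        - (1 / 4 + 2 * (1 / 6) + 0 * (1 / 6) + 0 ^ 2 * (1 / 6) ^ 2))) /
        (1 + 0 / 2 + 0 ^ 2 * (1 / 6)) ^ 2 = (-(1 / 2):ℝ) := by norm_num
    rw [h6] at h
    refine h.congr' ?_
    filter_upwards [self_mem_nhdsWithin] with t ht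
    have ht : 0 < t := ht
    have h1 := hqne t ht
    have h2 := hqp t ht
    have h3 := hexp t ht
    simp only [Pi.div_apply, psiSol]
    rw [h2, h3]
    have h4 : ∀ q : ℝ, q ≠ 0 → ∀ A B : ℝ, B * t ^ 2 = A - q ^ 2 →
        6 * B / q ^ 2 = 6 * A / (t * q) ^ 2 - 6 / t ^ 2 := by
      intro q hq A B hAB
      have : A = B * t ^ 2 + q ^ 2 := by linarith
      rw [this]
      field_simp
      ring
    apply h4 _ h1
    ring

lemma psiSol_top : Tendsto (fun t : ℝ => Real.exp t * psiSol t) atTop (nhds 6) := by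
  have he : Tendsto (fun t : ℝ => Real.exp (-t)) atTop (nhds 0) :=
    Real.tendsto_exp_neg_atTop_nhds_zero
  have h := (tendsto_const_nhds (x := (6:ℝ)) (f := (atTop : Filter ℝ))).div
    (((he.const_sub 1)).pow 2) (by norm_num)
  norm_num at h
  refine h.congr' ?_
  filter_upwards [eventually_gt_atTop 0] with t ht
  have h1 := psiSol_exp_pos ht
  have h2 := Real.exp_pos t
  have h3 : 1 - Real.exp (-t) = (Real.exp t - 1) / Real.exp t := by
    rw [Real.exp_neg]; field_simp
  simp only [psiSol, Pi.div_apply]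
  rw [h3]
  field_simp

lemma psiSol_cond : psiCond psiSol := by
  refine ⟨?_, ⟨fun t => -6 * Real.exp t * (Real.exp t + 1) / (Real.exp t - 1) ^ 3, ?_⟩, ?_, ?_⟩
  · intro t ht
    have := psiSol_exp_pos ht
    unfold psiSol
    positivity
  · intro t ht
    have h := psiSol_exp_pos ht
    have he := Real.hasDerivAt_exp t
    constructor
    · have := (he.const_mul 6).div ((he.sub_const 1).pow 2) (pow_pos h 2).ne'
      refine HasDerivAt.congr_deriv this ?_
      simp only [Nat.cast_ofNat, Pi.pow_apply]
      field_simp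
      ring
    · have := ((he.const_mul (-6)).mul (he.add_const 1)).div ((he.sub_const 1).pow 3)
        (pow_pos h 3).ne'
      refine HasDerivAt.congr_deriv this ?_
      simp only [Nat.cast_ofNat, Pi.pow_apply, Pi.mul_apply, psiSol]
      field_simp
      ring
  · have h := psiSol_asymp0.1
    have hid : Tendsto (fun t : ℝ => t⁻¹ ^ 2) (nhdsWithin 0 (Set.Ioi 0)) atTop :=
      (tendsto_pow_atTop (by norm_num)).comp tendsto_inv_nhdsGT_zero
    have := h.pos_mul_atTop (by norm_num) hid
    refine this.congr' ?_
    filter_upwards [self_mem_nhdsWithin] with t ht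
    have ht : 0 < t := ht
    field_simp
  · have h := psiSol_top.mul Real.tendsto_exp_neg_atTop_nhds_zero
    rw [mul_zero] at h
    refine h.congr ?_
    intro t
    rw [Real.exp_neg]
    have := Real.exp_pos t
    field_simp

lemma psi_unique (ψ : ℝ → ℝ) (h : psiCond ψ) (t : ℝ) (ht : 0 < t) : ψ t = psiSol t := by
  obtain ⟨hpos, ⟨φ, hφ⟩, hzero, htop⟩ := h
  simp only [Set.mem_Ioi] at hpos hφ
  have hmono : StrictMonoOn φ (Set.Ioi 0) := by
    refine strictMonoOn_of_deriv_pos (convex_Ioi 0) ?_ ?_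
    · intro x hx
      exact (hφ x hx).2.continuousAt.continuousWithinAt
    · intro x hx
      rw [interior_Ioi] at hx
      rw [(hφ x hx).2.deriv]
      have := hpos x hx
      positivity
  have hmvt : ∀ a b : ℝ, 0 < a → a < b → ∃ c ∈ Set.Ioo a b, φ c = (ψ b - ψ a) / (b - a) := by
    intro a b ha hab
    refine exists_hasDerivAt_eq_slope ψ φ hab ?_ ?_
    · intro x hx
      exact (hφ x (lt_of_lt_of_le ha hx.1)).1.continuousAt.continuousWithinAt
    · intro x hx
      exact (hφ x (ha.trans hx.1)).1
  have hneg : ∀ x : ℝ, 0 < x → φ x < 0 := by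
    intro x hx
    by_contra hcon
    push Not at hcon
    have hge : ψ x ≤ 0 := by
      refine ge_of_tendsto htop ?_
      filter_upwards [eventually_gt_atTop x] with y hy
      obtain ⟨c, hc, hc'⟩ := hmvt x y hx hy
      have h1 := hmono hx (hx.trans hc.1) hc.1
      have h2 : 0 < (ψ y - ψ x) / (y - x) := by linarith
      have h3 := (div_pos_iff_of_pos_right (sub_pos.2 hy)).1 h2
      linarith
    linarith [hpos x hx]
  have hφtop : Tendsto φ atTop (nhds 0) := by
    have hlow : Tendsto (fun x : ℝ => ψ x - ψ (x - 1)) atTop (nhds 0) := by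
      have := htop.sub (htop.comp (tendsto_atTop_add_const_right atTop (-1 : ℝ) tendsto_id))
      rw [sub_zero] at this
      exact this
    refine tendsto_of_tendsto_of_tendsto_of_le_of_le' hlow tendsto_const_nhds ?_ ?_
    · filter_upwards [eventually_gt_atTop 1] with x hx
      obtain ⟨c, hc, hc'⟩ := hmvt (x - 1) x (by linarith) (by linarith)
      have hc0 : 0 < c := by linarith [hc.1]
      have h1 := hmono hc0 (hc0.trans hc.2) hc.2
      rw [hc'] at h1
      have : x - (x - 1) = 1 := by ring
      rw [this, div_one] at h1
      exact h1.le
    · filter_upwards [eventually_gt_atTop 0] with x hx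
      exact (hneg x hx).le
  have hE : ∀ x : ℝ, 0 < x → φ x ^ 2 = 2 / 3 * ψ x ^ 3 + ψ x ^ 2 := by
    intro x hx
    have hconst := psi_const_aux (fun y => φ y ^ 2 - (2 / 3 * ψ y ^ 3 + ψ y ^ 2)) (by
      intro y hy
      obtain ⟨h1, h2⟩ := hφ y hy
      have := (h2.pow 2).sub (((h1.pow 3).const_mul (2 / 3)).add (h1.pow 2))
      refine HasDerivAt.congr_deriv this ?_
      simp
      ring)
    have hlim : Tendsto (fun y => φ y ^ 2 - (2 / 3 * ψ y ^ 3 + ψ y ^ 2)) atTop (nhds 0) := by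
      have := (hφtop.pow 2).sub (((htop.pow 3).const_mul (2 / 3)).add (htop.pow 2))
      norm_num at this
      norm_num
      exact this
    have hlim2 : Tendsto (fun y => φ y ^ 2 - (2 / 3 * ψ y ^ 3 + ψ y ^ 2)) atTop
        (nhds (φ x ^ 2 - (2 / 3 * ψ x ^ 3 + ψ x ^ 2))) := by
      refine tendsto_const_nhds.congr' ?_
      filter_upwards [eventually_gt_atTop 0] with y hy
      exact hconst x y hx hy
    have := tendsto_nhds_unique hlim hlim2
    linarith
  obtain ⟨w, hw⟩ : ∃ w : ℝ → ℝ, w = fun x => -φ x / ψ x := ⟨_, rfl⟩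
  have hwpos : ∀ x : ℝ, 0 < x → 0 < w x := by
    intro x hx
    rw [hw]
    exact div_pos (neg_pos.2 (hneg x hx)) (hpos x hx)
  have hwsq : ∀ x : ℝ, 0 < x → w x ^ 2 = 1 + 2 / 3 * ψ x := by
    intro x hx
    have h1 := hpos x hx
    have h2 := hE x hx
    simp only [hw]
    rw [div_pow, neg_sq, h2]
    field_simp
    ring
  have hwd : ∀ x : ℝ, 0 < x → HasDerivAt w (-(w x ^ 2 - 1) / 2) x := by
    intro x hx
    obtain ⟨h1, h2⟩ := hφ x hx
    have hp := hpos x hx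
    have h3 := hE x hx
    have := h2.neg.div h1 hp.ne'
    rw [hwsq x hx, hw]
    refine HasDerivAt.congr_deriv this ?_
    simp only [Pi.neg_apply]
    have e : -(ψ x ^ 2 + ψ x) * ψ x - -φ x * φ x = φ x ^ 2 - (ψ x ^ 2 + ψ x) * ψ x := by ring
    rw [e, h3]
    field_simp
    ring
  have hconst := psi_const_aux (fun x => (w x - 1) / (w x + 1) * Real.exp x) (by
    intro x hx
    have h1 := hwd x hx
    have h2 := hwpos x hx
    have := ((h1.sub_const 1).div (h1.add_const 1) (by positivity)).mul (Real.hasDerivAt_exp x)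
    refine HasDerivAt.congr_deriv this ?_
    simp only [Pi.div_apply]
    field_simp
    ring)
  have hwlim : Tendsto w (nhdsWithin 0 (Set.Ioi 0)) atTop := by
    have := Real.tendsto_sqrt_atTop.comp
      (tendsto_atTop_add_const_left _ 1 (hzero.const_mul_atTop (show (0:ℝ) < 2 / 3 by norm_num)))
    refine this.congr' ?_
    filter_upwards [self_mem_nhdsWithin] with x hx
    simp only [Function.comp]
    rw [← hwsq x hx, Real.sqrt_sq (hwpos x hx).le]
  have hglim : Tendsto (fun x => (w x - 1) / (w x + 1) * Real.exp x) (nhdsWithin 0 (Set.Ioi 0))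
      (nhds 1) := by
    have h1 := ((tendsto_inv_atTop_zero.comp
      (tendsto_atTop_add_const_right _ 1 hwlim)).const_mul 2).const_sub 1
    have h2 : Tendsto (fun t : ℝ => Real.exp t) (nhdsWithin 0 (Set.Ioi 0)) (nhds (Real.exp 0)) :=
      tendsto_nhdsWithin_of_tendsto_nhds (Real.continuous_exp.tendsto 0)
    have h3 := h1.mul h2
    rw [Real.exp_zero] at h3
    norm_num at h3
    refine h3.congr' ?_
    filter_upwards [self_mem_nhdsWithin] with x hx
    have := hwpos x hx
    field_simp
    ring
  have hg1 : (w t - 1) / (w t + 1) * Real.exp t = 1 := by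
    refine tendsto_nhds_unique ?_ hglim
    refine tendsto_const_nhds.congr' ?_
    filter_upwards [self_mem_nhdsWithin] with y hy
    exact hconst t y ht hy
  have h1 := hwpos t ht
  have h2 := hwsq t ht
  have h3 := psiSol_exp_pos ht
  have h4 : w t * (Real.exp t - 1) = Real.exp t + 1 := by
    field_simp at hg1
    linarith
  have h5 : w t = (Real.exp t + 1) / (Real.exp t - 1) := by
    rw [eq_div_iff h3.ne', h4]
  have h6 : ψ t = 3 / 2 * (w t ^ 2 - 1) := by linarith
  rw [h6, h5, psiSol]
  field_simp
  ring

/-- Appendix B of the paper.  There exists exactly one twice-differentiable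
`ψ : (0,∞) → ℝ` that is positive, satisfies `ψ'' = ψ² + ψ`, blows up at `0⁺` and vanishes at
`∞`; moreover `t²·ψ(t) → 6` and `ψ(t) − 6/t² → −1/2` as `t → 0⁺`, and `e^t·ψ(t) → C` as
`t → ∞` for some `C ∈ (0,∞)`. -/
theorem psi_exists_unique_asymptotics :
    (∃ ψ : ℝ → ℝ, psiCond ψ) ∧
    (∀ ψ₁ ψ₂ : ℝ → ℝ, psiCond ψ₁ → psiCond ψ₂ → Set.EqOn ψ₁ ψ₂ (Set.Ioi 0)) ∧
    ∀ ψ : ℝ → ℝ, psiCond ψ →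
      Tendsto (fun t : ℝ => t ^ 2 * ψ t) (nhdsWithin 0 (Set.Ioi 0)) (nhds 6) ∧
      Tendsto (fun t : ℝ => ψ t - 6 / t ^ 2) (nhdsWithin 0 (Set.Ioi 0)) (nhds (-(1 / 2))) ∧
      ∃ C : ℝ, 0 < C ∧ Tendsto (fun t : ℝ => Real.exp t * ψ t) atTop (nhds C) := by
  refine ⟨⟨psiSol, psiSol_cond⟩, ?_, ?_⟩
  · intro ψ₁ ψ₂ h₁ h₂ t ht
    rw [psi_unique ψ₁ h₁ t ht, psi_unique ψ₂ h₂ t ht]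
  · intro ψ h
    have he : ∀ᶠ t in nhdsWithin (0:ℝ) (Set.Ioi 0), psiSol t = ψ t := by
      filter_upwards [self_mem_nhdsWithin] with t ht
      exact (psi_unique ψ h t ht).symm
    refine ⟨psiSol_asymp0.1.congr' ?_, psiSol_asymp0.2.congr' ?_, 6, by norm_num,
      psiSol_top.congr' ?_⟩
    · filter_upwards [he] with t ht
      rw [ht]
    · filter_upwards [he] with t ht
      rw [ht]
    · filter_upwards [eventually_gt_atTop 0] with t ht
      rw [psi_unique ψ h t ht]
end

section
/- Fix an integer n ≥ 1 and let (b₀, b₁, …, b_{2n+2}) be uniformly distributed on the (nonempty, finite) set of integer sequences satisfying b₀ = 0, b₁ = −1, b_{2n+2} = 0 and |b_{k+1} − b_k| = 1 for every 0 ≤ k ≤ 2n+1. Let 𝒟 = {k : 1 ≤ k ≤ 2n+1 and b_{k+1} = b_k − 1} be the set of nonzero downstep indices. Then E[Σ_{k∈𝒟} b_k] = 0 and E[Σ_{k∈𝒟} b_k²] = n(n+1)/3. -/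
open MeasureTheory Filter

/-- An integer sequence is a `±1`-step bridge of length `2n+2` with `b₀ = 0`, `b₁ = −1`,
`b_{2n+2} = 0` (the value is pinned to `0` after time `2n+2`, so that there are only finitely
many such bridges). -/
def IsBridge (n : ℕ) (f : ℕ → ℤ) : Prop :=
  f 0 = 0 ∧ f 1 = -1 ∧ f (2 * n + 2) = 0 ∧
  (∀ k < 2 * n + 2, |f (k + 1) - f k| = 1) ∧
  ∀ k, 2 * n + 2 < k → f k = 0


def bcons (h : ℤ) (g : ℕ → ℤ) : ℕ → ℤ
  | 0 => h
  | k + 1 => g k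

@[simp] lemma bcons_zero (h : ℤ) (g : ℕ → ℤ) : bcons h g 0 = h := rfl
@[simp] lemma bcons_succ (h : ℤ) (g : ℕ → ℤ) (k : ℕ) : bcons h g (k + 1) = g k := rfl

lemma bcons_inj (h : ℤ) : Function.Injective (bcons h) := by
  intro f g hfg
  funext k
  exact congrFun hfg (k + 1)

open Classical in
noncomputable def bpaths : ℕ → ℤ → Finset (ℕ → ℤ)
  | 0, h => if h = 0 then {fun _ => 0} else ∅
  | m + 1, h => (bpaths m (h + 1)).image (bcons h) ∪ (bpaths m (h - 1)).image (bcons h)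

lemma mem_bpaths (m : ℕ) : ∀ (h : ℤ) (f : ℕ → ℤ), f ∈ bpaths m h ↔
    (f 0 = h ∧ (∀ k < m, |f (k + 1) - f k| = 1) ∧ ∀ k, m ≤ k → f k = 0) := by
  induction m with
  | zero =>
    intro h f
    unfold bpaths
    split_ifs with hh
    · subst hh
      simp only [Finset.mem_singleton]
      constructor
      · rintro rfl; simp
      · rintro ⟨_, _, h3⟩; funext k; exact h3 k (Nat.zero_le k)
    · simp only [Finset.notMem_empty, false_iff]
      rintro ⟨h1, _, h3⟩
      exact hh (h1 ▸ h3 0 le_rfl)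
  | succ m ih =>
    intro h f
    unfold bpaths
    simp only [Finset.mem_union, Finset.mem_image, ih]
    constructor
    · have key : ∀ h' g, |h' - h| = 1 → (g 0 = h' ∧ (∀ k < m, |g (k + 1) - g k| = 1) ∧
          ∀ k, m ≤ k → g k = 0) → bcons h g = f → (f 0 = h ∧
          (∀ k < m + 1, |f (k + 1) - f k| = 1) ∧ ∀ k, m + 1 ≤ k → f k = 0) := by
        rintro h' g hh ⟨h1, h2, h3⟩ rfl
        refine ⟨rfl, ?_, ?_⟩
        · intro k hk
          cases k with
          | zero => simpa [h1] using hh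
          | succ k => simpa using h2 k (by omega)
        · intro k hk
          cases k with
          | zero => omega
          | succ k => simpa using h3 k (by omega)
      rintro (⟨g, hg, hf⟩ | ⟨g, hg, hf⟩)
      · exact key _ g (by simp) hg hf
      · exact key _ g (by simp) hg hf
    · rintro ⟨h1, h2, h3⟩
      have hf : bcons h (fun k => f (k + 1)) = f := by
        funext k
        cases k with
        | zero => simp [h1]
        | succ k => rfl
      have h4 := h2 0 (by omega)
      rw [h1] at h4
      have h5 : f 1 = h + 1 ∨ f 1 = h - 1 := by
        rcases (abs_eq (by norm_num)).1 h4 with h5 | h5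
        · left; simp at h5; omega
        · right; simp at h5; omega
      rcases h5 with h5 | h5
      · left
        exact ⟨_, ⟨h5, fun k hk => h2 (k + 1) (by omega), fun k hk => h3 (k + 1) (by omega)⟩, hf⟩
      · right
        exact ⟨_, ⟨h5, fun k hk => h2 (k + 1) (by omega), fun k hk => h3 (k + 1) (by omega)⟩, hf⟩

lemma bpaths_empty (m : ℕ) : ∀ h : ℤ, (m : ℤ) < |h| → bpaths m h = ∅ := by
  induction m with
  | zero =>
    intro h hh
    have : h ≠ 0 := by rintro rfl; simp at hh
    simp [bpaths, this]
  | succ m ih =>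
    intro h hh
    push_cast at hh
    have h1 : (m : ℤ) < |h + 1| := by
      rcases lt_abs.1 hh with h | h
      · exact lt_abs.2 (Or.inl (by omega))
      · exact lt_abs.2 (Or.inr (by omega))
    have h2 : (m : ℤ) < |h - 1| := by
      rcases lt_abs.1 hh with h | h
      · exact lt_abs.2 (Or.inl (by omega))
      · exact lt_abs.2 (Or.inr (by omega))
    simp [bpaths, ih _ h1, ih _ h2]

lemma sum_bpaths_succ (m : ℕ) (h : ℤ) (G : (ℕ → ℤ) → ℝ) :
    ∑ f ∈ bpaths (m + 1) h, G f =
      ∑ g ∈ bpaths m (h + 1), G (bcons h g) + ∑ g ∈ bpaths m (h - 1), G (bcons h g) := by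
  classical
  rw [bpaths.eq_2, Finset.sum_union, Finset.sum_image (fun _ _ _ _ e => bcons_inj h e),
    Finset.sum_image (fun _ _ _ _ e => bcons_inj h e)]
  rw [Finset.disjoint_left]
  intro f hf hf'
  obtain ⟨g, hg, rfl⟩ := Finset.mem_image.1 hf
  obtain ⟨g', hg', e⟩ := Finset.mem_image.1 hf'
  have e' := bcons_inj h e
  subst e'
  have a := ((mem_bpaths _ _ _).1 hg).1
  have b := ((mem_bpaths _ _ _).1 hg').1
  omega

/-- Sum of the powers of the heights of the down steps among the first `m` steps. -/
noncomputable def dsum (j m : ℕ) (f : ℕ → ℤ) : ℝ :=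
  ∑ k ∈ Finset.range m, if f (k + 1) = f k - 1 then (f k : ℝ) ^ j else 0

lemma dsum_bcons (j m : ℕ) (h : ℤ) (g : ℕ → ℤ) :
    dsum j (m + 1) (bcons h g) = (if g 0 = h - 1 then (h : ℝ) ^ j else 0) + dsum j m g := by
  unfold dsum
  rw [Finset.sum_range_succ', add_comm]
  rfl

lemma sum_dsum_succ (j m : ℕ) (h : ℤ) :
    ∑ f ∈ bpaths (m + 1) h, dsum j (m + 1) f =
      ∑ g ∈ bpaths m (h + 1), dsum j m g + ((∑ g ∈ bpaths m (h - 1), (1 : ℝ)) * (h : ℝ) ^ j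
        + ∑ g ∈ bpaths m (h - 1), dsum j m g) := by
  rw [sum_bpaths_succ, Finset.sum_mul, ← Finset.sum_add_distrib]
  congr 1
  · refine Finset.sum_congr rfl fun g hg => ?_
    have a := ((mem_bpaths _ _ _).1 hg).1
    rw [dsum_bcons, if_neg (by omega), zero_add]
  · refine Finset.sum_congr rfl fun g hg => ?_
    have a := ((mem_bpaths _ _ _).1 hg).1
    rw [dsum_bcons, if_pos a, one_mul]

lemma main_count (m : ℕ) : ∀ p q : ℕ, p + q = m →
    (∑ f ∈ bpaths m ((q : ℤ) - p), (1 : ℝ)) = (m.choose q : ℝ) ∧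
    (∑ f ∈ bpaths m ((q : ℤ) - p), dsum 1 m f) = (m.choose q : ℝ) *
      (q * ((q : ℝ) - p) + p * q / 2 - q * (q - 1) / 2) ∧
    (∑ f ∈ bpaths m ((q : ℤ) - p), dsum 2 m f) = (m.choose q : ℝ) *
      (q * ((q : ℝ) - p) ^ 2 + ((q : ℝ) - p) * (p * q - q * (q - 1))
        + p * q / 2 + p * (p - 1) * q / 3 - 2 * p * q * (q - 1) / 3
        + (q - 1) * q * (2 * q - 1) / 6) := by
  induction m with
  | zero =>
    intro p q h
    obtain ⟨rfl, rfl⟩ : p = 0 ∧ q = 0 := by omega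
    simp [bpaths, dsum]
  | succ m ih =>
    intro p q hpq
    rw [sum_dsum_succ, sum_dsum_succ, sum_bpaths_succ]
    rcases p with _ | p
    · obtain rfl : q = m + 1 := by omega
      have e : bpaths m (((m + 1 : ℕ) : ℤ) - (0 : ℕ) + 1) = ∅ :=
        bpaths_empty _ _ (lt_abs.2 (Or.inl (by push_cast; omega)))
      have e2 : (((m + 1 : ℕ) : ℤ) - (0 : ℕ) - 1) = (m : ℤ) - (0 : ℕ) := by push_cast; ring
      obtain ⟨h0, h1, h2⟩ := ih 0 m (by omega)
      rw [e, e2, h0, h1, h2]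
      simp only [Nat.choose_self, Finset.sum_empty]
      push_cast
      refine ⟨by ring, by ring, by ring⟩
    rcases q with _ | q
    · obtain rfl : p = m := by omega
      have e : bpaths p (((0 : ℕ) : ℤ) - (p + 1 : ℕ) - 1) = ∅ :=
        bpaths_empty _ _ (lt_abs.2 (Or.inr (by push_cast; omega)))
      have e2 : (((0 : ℕ) : ℤ) - (p + 1 : ℕ) + 1) = ((0 : ℕ) : ℤ) - p := by push_cast; ring
      obtain ⟨h0, h1, h2⟩ := ih p 0 (by omega)
      rw [e, e2, h0, h1, h2]
      simp only [Nat.choose_zero_right, Finset.sum_empty]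
      push_cast
      refine ⟨by ring, by ring, by ring⟩
    have e1 : (((q + 1 : ℕ) : ℤ) - (p + 1 : ℕ) + 1) = ((q + 1 : ℕ) : ℤ) - p := by
      push_cast; ring
    have e2 : (((q + 1 : ℕ) : ℤ) - (p + 1 : ℕ) - 1) = (q : ℤ) - (p + 1 : ℕ) := by
      push_cast; ring
    obtain ⟨u0, u1, u2⟩ := ih p (q + 1) (by omega)
    obtain ⟨d0, d1, d2⟩ := ih (p + 1) q (by omega)
    rw [e1, e2, u0, u1, u2, d0, d1, d2]
    have c := Nat.choose_succ_right_eq m q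
    rw [show m - q = p + 1 by omega] at c
    have c' : (m.choose (q + 1) : ℝ) * (q + 1) = m.choose q * (p + 1) := by exact_mod_cast c
    obtain ⟨t, ht⟩ : ∃ t : ℝ, (m.choose q : ℝ) = t * (q + 1) :=
      ⟨(m.choose q : ℝ) / (q + 1), by field_simp⟩
    have ht' : (m.choose (q + 1) : ℝ) = t * (p + 1) := by
      have : (q + 1 : ℝ) ≠ 0 := by positivity
      apply mul_right_cancel₀ this
      rw [c', ht]; ring
    rw [Nat.choose_succ_succ]
    push_cast
    rw [ht, ht']
    refine ⟨by ring, by ring, by ring⟩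

lemma isBridge_iff (n : ℕ) (f : ℕ → ℤ) :
    IsBridge n f ↔ ∃ g ∈ bpaths (2 * n + 1) (-1), bcons 0 g = f := by
  constructor
  · rintro ⟨h0, h1, h2, h3, h4⟩
    refine ⟨fun k => f (k + 1), (mem_bpaths _ _ _).2 ⟨h1, fun k hk => h3 (k + 1) (by omega), ?_⟩, ?_⟩
    · intro k hk
      rcases hk.eq_or_lt with rfl | hk
      · exact h2
      · exact h4 _ (by omega)
    · funext k
      cases k with
      | zero => simp [h0]
      | succ k => rfl
  · rintro ⟨g, hg, rfl⟩
    obtain ⟨h0, h1, h2⟩ := (mem_bpaths _ _ _).1 hg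
    refine ⟨rfl, h0, h2 _ le_rfl, ?_, ?_⟩
    · intro k hk
      cases k with
      | zero => simp [h0]
      | succ k => simpa using h1 k (by omega)
    · intro k hk
      cases k with
      | zero => omega
      | succ k => simpa using h2 k (by omega)

lemma integral_bridge {Ω : Type*} [MeasurableSpace Ω] (P : Measure Ω) [IsProbabilityMeasure P]
    (n : ℕ) (b : Ω → ℕ → ℤ) (hbm : ∀ k : ℕ, Measurable fun ω => b ω k)
    (hae : ∀ᵐ ω ∂P, IsBridge n (b ω)) (c : ℝ)
    (hc : ∀ f, IsBridge n f → P.real {ω | b ω = f} = c) (G : (ℕ → ℤ) → ℝ) :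
    ∫ ω, G (b ω) ∂P = c * ∑ g ∈ bpaths (2 * n + 1) (-1), G (bcons 0 g) := by
  have hm : ∀ f : ℕ → ℤ, MeasurableSet {ω | b ω = f} := by
    intro f
    have : {ω | b ω = f} = ⋂ k, {ω | b ω k = f k} := by
      ext ω; simp [funext_iff]
    rw [this]
    exact MeasurableSet.iInter fun k => hbm k (measurableSet_singleton (f k))
  have h1 : ∀ᵐ ω ∂P, G (b ω) = ∑ g ∈ bpaths (2 * n + 1) (-1),
      Set.indicator {ω | b ω = bcons 0 g} (fun _ => G (bcons 0 g)) ω := by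
    filter_upwards [hae] with ω hω
    obtain ⟨g, hg, e⟩ := (isBridge_iff _ _).1 hω
    rw [Finset.sum_eq_single_of_mem g hg]
    · rw [Set.indicator_of_mem (show ω ∈ {ω | b ω = bcons 0 g} from e.symm), e]
    · intro g' _ hne
      apply Set.indicator_of_notMem
      intro h
      exact hne (bcons_inj 0 (h.symm.trans e.symm))
  rw [integral_congr_ae h1, integral_finsetSum, Finset.mul_sum]
  · refine Finset.sum_congr rfl fun g hg => ?_
    rw [integral_indicator_const _ (hm _), hc _ ((isBridge_iff _ _).2 ⟨g, hg, rfl⟩), smul_eq_mul]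
  · intro g _
    exact (integrable_const _).indicator (hm _)

lemma filter_sum_eq (j n : ℕ) (f : ℕ → ℤ) :
    (∑ k ∈ (Finset.Icc 1 (2 * n + 1)).filter (fun k => f (k + 1) = f k - 1), (f k : ℝ) ^ j)
      = dsum j (2 * n + 1) (fun k => f (k + 1)) := by
  unfold dsum
  rw [Finset.sum_filter, Finset.range_eq_Ico,
    Finset.sum_Ico_add' (fun k => if f (k + 1) = f k - 1 then (f k : ℝ) ^ j else 0) 0 (2 * n + 1) 1]
  rfl

/-- Section C.3 of the paper: moments of downsteps of a uniform bridge.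
Let `(b₀,…,b_{2n+2})` be uniform among `±1`-step bridges with `b₀ = 0`, `b₁ = −1`,
`b_{2n+2} = 0`, and let `𝒟 = {k : 1 ≤ k ≤ 2n+1, b_{k+1} = b_k − 1}` be the set of nonzero
downstep indices.  Then `E[Σ_{k∈𝒟} b_k] = 0` and `E[Σ_{k∈𝒟} b_k²] = n(n+1)/3`. -/
theorem bridge_downstep_moments
    {Ω : Type*} [MeasurableSpace Ω] (P : Measure Ω) [IsProbabilityMeasure P]
    (n : ℕ) (hn : 1 ≤ n) (b : Ω → ℕ → ℤ)
    (hbm : ∀ k : ℕ, Measurable fun ω => b ω k)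
    (hae : ∀ᵐ ω ∂P, IsBridge n (b ω))
    (hunif : ∀ f g : ℕ → ℤ, IsBridge n f → IsBridge n g →
      P {ω | b ω = f} = P {ω | b ω = g}) :
    (∫ ω, (∑ k ∈ (Finset.Icc 1 (2 * n + 1)).filter
        (fun k => b ω (k + 1) = b ω k - 1), (b ω k : ℝ)) ∂P) = 0
    ∧
    (∫ ω, (∑ k ∈ (Finset.Icc 1 (2 * n + 1)).filter
        (fun k => b ω (k + 1) = b ω k - 1), ((b ω k : ℝ)) ^ 2) ∂P) = n * (n + 1) / 3 := by
  obtain ⟨ω₀, h₀⟩ := hae.exists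
  have hc : ∀ f, IsBridge n f → P.real {ω | b ω = f} = P.real {ω | b ω = b ω₀} := by
    intro f hf
    unfold Measure.real
    rw [hunif f _ hf h₀]
  have key := integral_bridge P n b hbm hae _ hc
  have hone := key (fun _ => 1)
  obtain ⟨c0, c1, c2⟩ := main_count (2 * n + 1) (n + 1) n (by omega)
  rw [show ((n : ℤ) - (n + 1 : ℕ)) = -1 by push_cast; ring] at c0 c1 c2
  rw [c0] at hone
  simp only [integral_const, probReal_univ, smul_eq_mul, mul_one] at hone
  have k1 := key (fun f => dsum 1 (2 * n + 1) (fun k => f (k + 1)))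
  have k2 := key (fun f => dsum 2 (2 * n + 1) (fun k => f (k + 1)))
  simp only [bcons_succ] at k1 k2
  rw [c1, ← mul_assoc, ← hone] at k1
  rw [c2, ← mul_assoc, ← hone] at k2
  simp only [← filter_sum_eq, pow_one] at k1 k2
  rw [k1, k2]
  push_cast
  constructor <;> ring
end
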